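/- Let β ∈ ℝ and M > 0. Let 𝔔 : ℝ × ℝ → ℂ possess partial derivatives ∂_x^j ∂_k^ρ 𝔔 for j, ρ ∈ {0,1}, with |⟨x⟩^β ∂_x^j ∂_k^ρ 𝔔(x,k)| ≤ M for all j, ρ ∈ {0,1} and all x, k. Assume moreover that for each j, ρ ∈ {0,1} the linear map g ↦ ( x ↦ ∫_ℝ e^{ikx} ⟨x⟩^β (∂_x^j ∂_k^ρ 𝔔)(x,k) g(k) dk ) is bounded from L²(ℝ) to L²(ℝ) with operator norm at most M. Then there exists C > 0 depending only on M such that for every t ≥ 1 and every Schwartz function h : ℝ → ℂ: ( ∫_ℝ ⟨x⟩^{2(β−1)} | ∂_x ∫_0^∞ e^{ikx} 𝔔(x,k) e^{ik²t} h(k) dk |² dx )^{1/2} ≤ C t^{−1/2} ‖h‖_{H¹(ℝ)}. -/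

import Mathlib

open MeasureTheory Filter Topology Set

noncomputable def jap (x : ℝ) : ℝ := Real.sqrt (1 + x ^ 2)

noncomputable def ET (G : ℝ → ℂ) (x : ℝ) : ℂ :=
  ∫ k : ℝ, Complex.exp (Complex.I * (k : ℂ) * (x : ℂ)) * G k

open scoped FourierTransform SchwartzMap ENNReal in
theorem plancherel_aux (G : ℝ → ℂ) (h1 : Integrable G) (h2 : MemLp G 2) :
    ∫⁻ x : ℝ, ‖𝓕 G x‖ₑ ^ 2 ≤ ∫⁻ k : ℝ, ‖G k‖ₑ ^ 2 := by
  set Γ : Lp (α := ℝ) ℂ 2 volume := 𝓕 (h2.toLp G) with hΓ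
  have hcont : Continuous (𝓕 G) :=
    VectorFourier.fourierIntegral_continuous Real.continuous_fourierChar
      (by exact continuous_inner) h1
  have hae : ∀ᵐ x : ℝ, 𝓕 G x = Γ x := by
    apply ae_eq_of_integral_contDiff_smul_eq
    · exact hcont.locallyIntegrable
    · exact (Lp.memLp Γ).locallyIntegrable (by norm_num)
    · intro g g_smooth g_cpt
      have hg₁ : HasCompactSupport (Complex.ofRealCLM ∘ g) := g_cpt.comp_left rfl
      have hg₂ : ContDiff ℝ (⊤ : ℕ∞) (Complex.ofRealCLM ∘ g) := by fun_prop
      set φ : 𝓢(ℝ, ℂ) := hg₁.toSchwartzMap hg₂ with hφ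
      have e1 : ∫ x, g x • Γ x = Lp.toTemperedDistribution Γ φ := by
        simp [hφ]
      have e2 : Lp.toTemperedDistribution Γ φ = ∫ x, (𝓕 φ : 𝓢(ℝ, ℂ)) x • G x := by
        rw [hΓ, ← MeasureTheory.Lp.fourier_toTemperedDistribution_eq,
          TemperedDistribution.fourier_apply, Lp.toTemperedDistribution_apply]
        apply integral_congr_ae
        filter_upwards [h2.coeFn_toLp] with x hx
        rw [hx]
      have e3 : ∫ x, (𝓕 φ : 𝓢(ℝ, ℂ)) x • G x = ∫ x, φ x • 𝓕 G x := by
        have := VectorFourier.integral_fourierIntegral_smul_eq_flip (L := innerₗ ℝ)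
          (f := (φ : ℝ → ℂ)) (g := G) (μ := volume) (ν := volume)
          Real.continuous_fourierChar (by exact continuous_inner) φ.integrable h1
        rw [flip_innerₗ] at this
        rw [SchwartzMap.fourier_coe]
        exact this
      rw [e1, e2, e3]
      simp [hφ]
  have hn : ‖Γ‖ = ‖h2.toLp G‖ := MeasureTheory.Lp.norm_fourier_eq _
  have key : ∀ f : Lp (α := ℝ) ℂ 2 volume, ∫⁻ x, ‖f x‖ₑ ^ 2 = ENNReal.ofReal (‖f‖ ^ 2) := by
    intro f
    have := eLpNorm_nnreal_pow_eq_lintegral (f := f) (μ := volume) (p := 2) (by norm_num)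
    norm_num at this
    rw [← this, ENNReal.ofReal_pow (norm_nonneg _), ofReal_norm, Lp.enorm_def]
  have l1 : ∫⁻ x : ℝ, ‖𝓕 G x‖ₑ ^ 2 = ∫⁻ x, ‖Γ x‖ₑ ^ 2 := by
    apply lintegral_congr_ae
    filter_upwards [hae] with x hx
    rw [hx]
  have l2 : ∫⁻ x : ℝ, ‖G x‖ₑ ^ 2 = ∫⁻ x, ‖h2.toLp G x‖ₑ ^ 2 := by
    apply lintegral_congr_ae
    filter_upwards [h2.coeFn_toLp] with x hx
    rw [hx]
  rw [l1, l2, key, key, hn]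

open scoped FourierTransform in
theorem ET_eq (G : ℝ → ℂ) (x : ℝ) : ET G x = 𝓕 G ((-(2 * Real.pi)⁻¹) * x) := by
  rw [Real.fourier_real_eq_integral_exp_smul, ET]
  congr 1
  ext k
  rw [smul_eq_mul]
  congr 2
  push_cast
  field_simp

theorem plancherel (G : ℝ → ℂ) (h1 : Integrable G) (h2 : MemLp G 2) :
    ∫⁻ x : ℝ, ‖ET G x‖ₑ ^ 2 ≤ 7 * ∫⁻ k : ℝ, ‖G k‖ₑ ^ 2 := by
  have hc : (-(2 * Real.pi)⁻¹) ≠ 0 := by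
    have := Real.pi_pos
    simp
  simp_rw [ET_eq]
  have := MeasurableEmbedding.lintegral_map (μ := volume) (Homeomorph.mulLeft₀ _ hc).measurableEmbedding
    (fun y => ‖FourierTransform.fourier G y‖ₑ ^ 2)
  simp only [Homeomorph.coe_mulLeft₀] at this
  rw [← this, Real.map_volume_mul_left hc, lintegral_smul_measure, smul_eq_mul]
  refine mul_le_mul' ?_ ?_
  · rw [inv_neg, inv_inv, abs_neg, abs_of_pos (by positivity)]
    have : (7 : ENNReal) = ENNReal.ofReal 7 := by norm_num
    rw [this]
    apply ENNReal.ofReal_le_ofReal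
    have := Real.pi_lt_d2
    linarith
  · exact plancherel_aux G h1 h2

theorem jap_pos (x : ℝ) : 0 < jap x := Real.sqrt_pos.mpr (by positivity)

theorem jap_rpow_pos (x β : ℝ) : 0 < jap x ^ β := Real.rpow_pos_of_pos (jap_pos x) β

theorem jap_sq (x : ℝ) : jap x ^ 2 = 1 + x ^ 2 := Real.sq_sqrt (by positivity)

theorem jap_continuous : Continuous jap := by unfold jap; fun_prop

theorem jap_rpow_continuous (β : ℝ) : Continuous (fun x => jap x ^ β) :=
  jap_continuous.rpow_const (fun x => Or.inl (jap_pos x).ne')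

theorem jap_le {x y : ℝ} (h : |x| ≤ |y|) : jap x ≤ jap y := by
  apply Real.sqrt_le_sqrt
  have := sq_le_sq.mpr h
  linarith

theorem base_point (β : ℝ) (n : ℤ) : ∃ e ∈ Icc (n : ℝ) (n + 1), ∀ x ∈ Icc (n : ℝ) (n + 1),
    ∀ y ∈ uIcc e x, jap x ^ β ≤ jap y ^ β := by
  have key : ∃ e ∈ Icc (n : ℝ) (n + 1), ∀ x ∈ Icc (n : ℝ) (n + 1),
    ∀ y ∈ uIcc e x, if 0 ≤ β then |x| ≤ |y| else |y| ≤ |x| := by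
    rcases le_or_gt 0 n with hn | hn
    · have hn' : (0 : ℝ) ≤ n := by exact_mod_cast hn
      by_cases hb : 0 ≤ β
      · refine ⟨n + 1, by simp, fun x hx y hy => ?_⟩
        rw [uIcc_of_ge hx.2] at hy
        rw [if_pos hb, abs_of_nonneg (hn'.trans hx.1), abs_of_nonneg ((hn'.trans hx.1).trans hy.1)]
        exact hy.1
      · refine ⟨n, by simp, fun x hx y hy => ?_⟩
        rw [uIcc_of_le hx.1] at hy
        rw [if_neg hb, abs_of_nonneg (hn'.trans hx.1), abs_of_nonneg (hn'.trans hy.1)]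
        exact hy.2
    · have hn' : (n : ℝ) + 1 ≤ 0 := by exact_mod_cast hn
      by_cases hb : 0 ≤ β
      · refine ⟨n, by simp, fun x hx y hy => ?_⟩
        rw [uIcc_of_le hx.1] at hy
        rw [if_pos hb, abs_of_nonpos (hx.2.trans hn'), abs_of_nonpos (hy.2.trans (hx.2.trans hn'))]
        linarith [hy.2]
      · refine ⟨n + 1, by simp, fun x hx y hy => ?_⟩
        rw [uIcc_of_ge hx.2] at hy
        rw [if_neg hb, abs_of_nonpos (hx.2.trans hn'), abs_of_nonpos (hy.2.trans hn')]
        linarith [hy.1]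
  obtain ⟨e, he, H⟩ := key
  refine ⟨e, he, fun x hx y hy => ?_⟩
  have := H x hx y hy
  split_ifs at this with hb
  · exact Real.rpow_le_rpow (jap_pos x).le (jap_le this) hb
  · exact Real.rpow_le_rpow_of_nonpos (jap_pos y) (jap_le this) (not_le.mp hb).le

theorem lintegral_sq_le (f : ℝ → ENNReal) (n : ℤ)
    (hf : AEMeasurable f (volume.restrict (Ioc (n : ℝ) (n + 1)))) :
    (∫⁻ y in Ioc (n : ℝ) (n + 1), f y) ^ 2 ≤ ∫⁻ y in Ioc (n : ℝ) (n + 1), f y ^ 2 := by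
  have := ENNReal.lintegral_mul_le_Lp_mul_Lq (volume.restrict (Ioc (n : ℝ) (n + 1)))
    Real.HolderConjugate.two_two hf (aemeasurable_const (b := (1 : ENNReal)))
  simp only [Pi.mul_apply, mul_one, ENNReal.one_rpow, lintegral_const, Measure.restrict_apply,
    MeasurableSet.univ, univ_inter, Real.volume_Ioc, add_sub_cancel_left, ENNReal.ofReal_one] at this
  refine (pow_le_pow_left' this 2).trans ?_
  rw [← ENNReal.rpow_natCast, ← ENNReal.rpow_mul]
  simp

theorem meas_deriv_param (q : ℝ → ℝ → ℂ) (hqm : ∀ x, Measurable (q x))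
    (hqd : ∀ k, Differentiable ℝ (fun x => q x k)) :
    Measurable (Function.uncurry (fun y k => deriv (fun x' => q x' k) y)) := by
  have hu : Measurable (Function.uncurry q) :=
    measurable_uncurry_of_continuous_of_measurable (fun k => (hqd k).continuous) hqm
  have hlim : Tendsto (fun n : ℕ => fun p : ℝ × ℝ =>
      ((1 / ((n : ℝ) + 1))⁻¹ : ℝ) • (q (p.1 + 1 / ((n : ℝ) + 1)) p.2 - q p.1 p.2)) atTop
      (𝓝 (Function.uncurry (fun y k => deriv (fun x' => q x' k) y))) := by
    rw [tendsto_pi_nhds]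
    rintro ⟨y, k⟩
    have h1 := ((hqd k) y).hasDerivAt
    rw [hasDerivAt_iff_tendsto_slope_zero] at h1
    have h2 : Tendsto (fun n : ℕ => 1 / ((n : ℝ) + 1)) atTop (𝓝[≠] 0) := by
      apply tendsto_nhdsWithin_iff.mpr ⟨tendsto_one_div_add_atTop_nhds_zero_nat, ?_⟩
      filter_upwards with n
      have : (0 : ℝ) < 1 / ((n : ℝ) + 1) := by positivity
      exact this.ne'
    exact h1.comp h2
  refine measurable_of_tendsto_metrizable (fun n => ?_) hlim
  have : Measurable (fun p : ℝ × ℝ => q (p.1 + 1 / ((n : ℝ) + 1)) p.2) :=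
    hu.comp (by fun_prop : Measurable (fun p : ℝ × ℝ => (p.1 + 1 / ((n : ℝ) + 1), p.2)))
  have h' : Measurable (fun p : ℝ × ℝ => q p.1 p.2) := hu
  exact (this.sub h').const_smul ((1 / ((n : ℝ) + 1))⁻¹ : ℝ)

theorem int_bdd_mul (r g : ℝ → ℂ) (M : ℝ) (hr : Measurable r) (hb : ∀ k, ‖r k‖ ≤ M)
    (g1 : Integrable g) : Integrable (fun k => r k * g k) :=
  g1.bdd_mul hr.aestronglyMeasurable (Eventually.of_forall hb)

theorem ET_bdd (r g : ℝ → ℂ) (M : ℝ) (hr : Measurable r) (hb : ∀ k, ‖r k‖ ≤ M)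
    (g1 : Integrable g) (g2 : MemLp g 2) :
    ∫⁻ x : ℝ, ‖ET (fun k => r k * g k) x‖ₑ ^ 2 ≤
      7 * (ENNReal.ofReal (M ^ 2) * ∫⁻ k : ℝ, ‖g k‖ₑ ^ 2) := by
  have hM : 0 ≤ M := (norm_nonneg _).trans (hb 0)
  refine (plancherel _ (int_bdd_mul r g M hr hb g1) ?_).trans ?_
  · refine MemLp.of_le_mul (c := M) g2 (hr.aestronglyMeasurable.mul g2.1) ?_
    filter_upwards with k
    rw [norm_mul]
    exact mul_le_mul_of_nonneg_right (hb k) (norm_nonneg _)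
  · refine mul_le_mul' le_rfl ?_
    rw [← lintegral_const_mul' _ _ ENNReal.ofReal_ne_top]
    apply lintegral_mono
    intro k
    simp only
    rw [enorm_mul, mul_pow, ENNReal.ofReal_pow hM]
    refine mul_le_mul' (pow_le_pow_left' ?_ 2) le_rfl
    rw [← ofReal_norm]
    exact ENNReal.ofReal_le_ofReal (hb k)

theorem norm_cexp_I (k x : ℝ) : ‖Complex.exp (Complex.I * (k : ℂ) * (x : ℂ))‖ = 1 := by
  have : Complex.I * (k : ℂ) * (x : ℂ) = ((k * x : ℝ) : ℂ) * Complex.I := by push_cast; ring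
  rw [this, Complex.norm_exp_ofReal_mul_I]

theorem int_exp_mul (f : ℝ → ℂ) (x : ℝ) (hf : Integrable f) :
    Integrable (fun k : ℝ => Complex.exp (Complex.I * (k : ℂ) * (x : ℂ)) * f k) :=
  hf.bdd_mul (c := 1) (by fun_prop) (Eventually.of_forall fun k => (norm_cexp_I k x).le)

theorem meas_ET (r : ℝ → ℝ → ℂ) (hr : Measurable (Function.uncurry r)) :
    Measurable (fun x => ET (r x) x) := by
  have : StronglyMeasurable (Function.uncurry fun x k : ℝ =>
      Complex.exp (Complex.I * (k : ℂ) * (x : ℂ)) * r x k) := by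
    apply Measurable.stronglyMeasurable
    apply Measurable.mul _ hr
    fun_prop
  exact (this.integral_prod_right (ν := volume)).measurable

theorem meas_ET2 (r : ℝ → ℝ → ℂ) (hr : Measurable (Function.uncurry r)) :
    Measurable (fun p : ℝ × ℝ => ET (r p.2) p.1) := by
  have : StronglyMeasurable (fun z : (ℝ × ℝ) × ℝ =>
      Complex.exp (Complex.I * (z.2 : ℂ) * (z.1.1 : ℂ)) * r z.1.2 z.2) := by
    apply Measurable.stronglyMeasurable
    apply Measurable.mul
    · fun_prop
    · exact hr.comp (by fun_prop : Measurable (fun z : (ℝ × ℝ) × ℝ => (z.1.2, z.2)))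
  exact (this.integral_prod_right' (ν := volume)).measurable

theorem ET_const_mul (c : ℂ) (f : ℝ → ℂ) (x : ℝ) : ET (fun k => c * f k) x = c * ET f x := by
  unfold ET
  rw [← integral_const_mul]
  congr 1
  ext k
  ring

theorem ET_w (w : ℝ) (r g : ℝ → ℂ) (x : ℝ) :
    ET (fun k => (w : ℂ) * r k * g k) x = (w : ℂ) * ET (fun k => r k * g k) x := by
  rw [← ET_const_mul]
  simp_rw [mul_assoc]

theorem enorm_ET_w (w : ℝ) (hw : 0 ≤ w) (r g : ℝ → ℂ) (x : ℝ) :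
    ‖ET (fun k => (w : ℂ) * r k * g k) x‖ₑ = ENNReal.ofReal w * ‖ET (fun k => r k * g k) x‖ₑ := by
  rw [ET_w, enorm_mul]
  congr 1
  rw [← ofReal_norm, Complex.norm_real, Real.norm_of_nonneg hw]

theorem bdd_of_w {w M : ℝ} (hw : 0 < w) {z : ℂ} (h : w * ‖z‖ ≤ M) : ‖z‖ ≤ w⁻¹ * M := by
  rw [inv_mul_eq_div, le_div_iff₀ hw, mul_comm]
  exact h

theorem pointwise_step (β M : ℝ) (q : ℝ → ℝ → ℂ)
    (hqm : ∀ x, Measurable (q x)) (hqd : ∀ k, Differentiable ℝ (fun x => q x k))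
    (b0 : ∀ x k, jap x ^ β * ‖q x k‖ ≤ M)
    (b1 : ∀ x k, jap x ^ β * ‖deriv (fun x' => q x' k) x‖ ≤ M)
    (g : ℝ → ℂ) (gm : Measurable g) (g1 : Integrable g) (e x : ℝ)
    (hex : ∀ y ∈ uIcc e x, jap x ^ β ≤ jap y ^ β) :
    ‖ET (fun k => ((jap x ^ β : ℝ) : ℂ) * q x k * g k) x‖ₑ ≤
      ‖ET (fun k => ((jap e ^ β : ℝ) : ℂ) * q e k * g k) x‖ₑ +
      ∫⁻ y in uIoc e x,
        ‖ET (fun k => ((jap y ^ β : ℝ) : ℂ) * deriv (fun x' => q x' k) y * g k) x‖ₑ := by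
  have hp := meas_deriv_param q hqm hqd
  set p : ℝ → ℝ → ℂ := fun y k => deriv (fun x' => q x' k) y with hpdef
  have hpm : ∀ y, Measurable (p y) := fun y => hp.comp (by fun_prop : Measurable fun k => (y, k))
  have hpm2 : ∀ k, Measurable (fun y => p y k) :=
    fun k => hp.comp (by fun_prop : Measurable fun y => (y, k))
  have hM : 0 ≤ M := le_trans (mul_nonneg (jap_rpow_pos 0 β).le (norm_nonneg _)) (b0 0 0)
  have pb : ∀ y ∈ uIoc e x, ∀ k, ‖p y k‖ ≤ (jap x ^ β)⁻¹ * M := by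
    intro y hy k
    refine (bdd_of_w (jap_rpow_pos y β) (b1 y k)).trans ?_
    apply mul_le_mul_of_nonneg_right _ hM
    exact inv_anti₀ (jap_rpow_pos x β) (hex y (uIoc_subset_uIcc hy))
  have hpi : ∀ k, IntervalIntegrable (fun y => p y k) volume e x := by
    intro k
    refine IntervalIntegrable.mono_fun' (g := fun _ => (jap x ^ β)⁻¹ * M)
      intervalIntegrable_const (hpm2 k).aestronglyMeasurable ?_
    filter_upwards [ae_restrict_mem measurableSet_uIoc] with y hy using pb y hy k
  have ftc : ∀ k, ∫ y in e..x, p y k = q x k - q e k := fun k =>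
    intervalIntegral.integral_eq_sub_of_hasDerivAt (fun y _ => (hqd k y).hasDerivAt) (hpi k)
  have hi : ∀ z, Integrable (fun k => q z k * g k) := fun z =>
    int_bdd_mul _ _ _ (hqm z) (fun k => bdd_of_w (jap_rpow_pos z β) (b0 z k)) g1
  have hswap : ∫ y in e..x, ET (fun k => p y k * g k) x =
      ∫ k : ℝ, ∫ y in e..x, Complex.exp (Complex.I * (k : ℂ) * (x : ℂ)) * (p y k * g k) := by
    unfold ET
    apply intervalIntegral_integral_swap
    have hbase : Integrable (fun z : ℝ × ℝ => ((jap x ^ β)⁻¹ * M) * ‖g z.2‖)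
        ((volume.restrict (uIoc e x)).prod volume) := by
      have : Integrable (fun _ : ℝ => (jap x ^ β)⁻¹ * M) (volume.restrict (uIoc e x)) := by
        apply integrable_const_iff.mpr
        right
        constructor
        simp [uIoc]
      exact this.mul_prod g1.norm
    refine hbase.mono' ?_ ?_
    · apply Measurable.aestronglyMeasurable
      apply Measurable.mul
      · fun_prop
      · exact hp.mul (gm.comp measurable_snd)
    · have : ∀ᵐ z : ℝ × ℝ ∂((volume.restrict (uIoc e x)).prod volume), z.1 ∈ uIoc e x :=
        Measure.quasiMeasurePreserving_fst.ae (ae_restrict_mem measurableSet_uIoc)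
      filter_upwards [this] with z hz
      simp only [Function.uncurry]
      rw [norm_mul, norm_cexp_I, one_mul, norm_mul]
      exact mul_le_mul_of_nonneg_right (pb _ hz _) (norm_nonneg _)
  have main : ET (fun k => q x k * g k) x = ET (fun k => q e k * g k) x +
      ∫ y in e..x, ET (fun k => p y k * g k) x := by
    rw [hswap, ET, ET, ← sub_eq_iff_eq_add', ← integral_sub (int_exp_mul _ x (hi x))
      (int_exp_mul _ x (hi e))]
    congr 1
    ext k
    rw [intervalIntegral.integral_const_mul, intervalIntegral.integral_mul_const, ftc k]
    ring
  have hbound : ‖∫ y in e..x, ET (fun k => p y k * g k) x‖ₑ ≤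
      ∫⁻ y in uIoc e x, ‖ET (fun k => p y k * g k) x‖ₑ := by
    have : ‖∫ y in e..x, ET (fun k => p y k * g k) x‖ₑ =
        ‖∫ y in uIoc e x, ET (fun k => p y k * g k) x‖ₑ := by
      rw [← ofReal_norm, ← ofReal_norm, intervalIntegral.norm_intervalIntegral_eq]
    rw [this]
    exact enorm_integral_le_lintegral_enorm _
  rw [enorm_ET_w _ (jap_rpow_pos _ _).le, enorm_ET_w _ (jap_rpow_pos _ _).le, main]
  refine (mul_le_mul' le_rfl ((enorm_add_le _ _).trans (add_le_add le_rfl hbound))).trans ?_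
  rw [mul_add]
  refine add_le_add ?_ ?_
  · exact mul_le_mul' (ENNReal.ofReal_le_ofReal (hex e left_mem_uIcc)) le_rfl
  · rw [← lintegral_const_mul' _ _ ENNReal.ofReal_ne_top]
    refine setLIntegral_mono' measurableSet_uIoc ?_
    intro y hy
    rw [enorm_ET_w _ (jap_rpow_pos _ _).le]
    exact mul_le_mul' (ENNReal.ofReal_le_ofReal (hex y (uIoc_subset_uIcc hy))) le_rfl

noncomputable def KL : ENNReal := 28 * ∑' n : ℤ, ENNReal.ofReal (3 * (1 + (n : ℝ) ^ 2)⁻¹)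

theorem KL_ne_top : KL ≠ ⊤ := by
  unfold KL
  apply ENNReal.mul_ne_top (by norm_num)
  have hs : Summable (fun n : ℤ => 3 * (1 + (n : ℝ) ^ 2)⁻¹) := by
    apply Summable.mul_left
    have h2 : Summable (fun n : ℤ => 1 / (n : ℝ) ^ 2) :=
      Real.summable_one_div_int_pow.mpr (by norm_num)
    have h3 : Summable (fun n : ℤ => 1 / (n : ℝ) ^ 2 + if n = 0 then (1 : ℝ) else 0) := by
      apply h2.add
      exact summable_of_ne_finset_zero (s := {0}) (by intro b hb; simp at hb; simp [hb])
    refine Summable.of_nonneg_of_le (fun n => by positivity) (fun n => ?_) h3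
    by_cases hn : n = 0
    · simp [hn]
    · have : (0 : ℝ) < (n : ℝ) ^ 2 := by positivity
      simp only [hn, if_false, add_zero, one_div]
      exact inv_anti₀ this (by linarith)
  rw [← ENNReal.ofReal_tsum_of_nonneg (fun n => by positivity) hs]
  exact ENNReal.ofReal_ne_top

theorem sq_add_le (a b : ENNReal) : (a + b) ^ 2 ≤ 2 * (a ^ 2 + b ^ 2) := by
  rcases eq_or_ne a ⊤ with rfl | ha
  · simp
  rcases eq_or_ne b ⊤ with rfl | hb
  · simp
  lift a to NNReal using ha
  lift b to NNReal using hb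
  norm_cast
  rw [← NNReal.coe_le_coe]
  push_cast
  nlinarith [sq_nonneg ((a : ℝ) - b)]

theorem local_L2 (β M : ℝ) (q : ℝ → ℝ → ℂ)
    (hqm : ∀ x, Measurable (q x)) (hqd : ∀ k, Differentiable ℝ (fun x => q x k))
    (b0 : ∀ x k, jap x ^ β * ‖q x k‖ ≤ M)
    (b1 : ∀ x k, jap x ^ β * ‖deriv (fun x' => q x' k) x‖ ≤ M)
    (g : ℝ → ℂ) (gm : Measurable g) (g1 : Integrable g) (g2 : MemLp g 2) :
    ∫⁻ x : ℝ, ENNReal.ofReal ((1 + x ^ 2)⁻¹) *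
      ‖ET (fun k => ((jap x ^ β : ℝ) : ℂ) * q x k * g k) x‖ₑ ^ 2 ≤
    KL * (ENNReal.ofReal (M ^ 2) * ∫⁻ k : ℝ, ‖g k‖ₑ ^ 2) := by
  have hp := meas_deriv_param q hqm hqd
  have wb : ∀ (y k : ℝ) (z : ℂ), jap y ^ β * ‖z‖ ≤ M → ‖((jap y ^ β : ℝ) : ℂ) * z‖ ≤ M := by
    intro y k z hz
    rwa [norm_mul, Complex.norm_real, Real.norm_of_nonneg (jap_rpow_pos y β).le]
  set N := ENNReal.ofReal (M ^ 2) * ∫⁻ k : ℝ, ‖g k‖ₑ ^ 2 with hN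
  rw [← setLIntegral_univ, ← iUnion_Ioc_intCast ℝ, lintegral_iUnion (fun _ => measurableSet_Ioc)
    (pairwise_disjoint_Ioc_intCast ℝ), KL, mul_assoc, ← ENNReal.tsum_mul_right, ← ENNReal.tsum_mul_left]
  refine ENNReal.tsum_le_tsum fun n => ?_
  obtain ⟨e, he, H⟩ := base_point β n
  set A : ℝ → ENNReal := fun x => ‖ET (fun k => ((jap e ^ β : ℝ) : ℂ) * q e k * g k) x‖ₑ
  set B : ℝ → ℝ → ENNReal := fun x y =>
    ‖ET (fun k => ((jap y ^ β : ℝ) : ℂ) * deriv (fun x' => q x' k) y * g k) x‖ₑ with hB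
  have hBm : Measurable (Function.uncurry B) := by
    have : Measurable (Function.uncurry fun y k =>
        ((jap y ^ β : ℝ) : ℂ) * deriv (fun x' => q x' k) y * g k) := by
      apply Measurable.mul _ (gm.comp measurable_snd)
      apply Measurable.mul _ hp
      exact Complex.measurable_ofReal.comp ((jap_rpow_continuous β).measurable.comp measurable_fst)
    exact (meas_ET2 _ this).enorm
  have hAm : Measurable A := by
    have : Measurable (Function.uncurry fun (_ : ℝ) k => ((jap e ^ β : ℝ) : ℂ) * q e k * g k) := by
      apply Measurable.mul _ (gm.comp measurable_snd)
      exact ((hqm e).comp measurable_snd).const_mul _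
    exact (meas_ET _ this).enorm
  have hA2 : ∫⁻ x, A x ^ 2 ≤ 7 * N :=
    ET_bdd _ g M ((hqm e).const_mul _) (fun k => wb e k _ (b0 e k)) g1 g2
  have hB2 : ∀ y, ∫⁻ x, B x y ^ 2 ≤ 7 * N := fun y =>
    ET_bdd _ g M ((hp.comp (by fun_prop : Measurable fun k : ℝ => (y, k))).const_mul _)
      (fun k => wb y k _ (b1 y k)) g1 g2
  have step : ∀ x ∈ Ioc (n : ℝ) (n + 1), ENNReal.ofReal ((1 + x ^ 2)⁻¹) *
      ‖ET (fun k => ((jap x ^ β : ℝ) : ℂ) * q x k * g k) x‖ₑ ^ 2 ≤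
      ENNReal.ofReal (3 * (1 + (n : ℝ) ^ 2)⁻¹) *
        (2 * (A x ^ 2 + ∫⁻ y in Ioc (n : ℝ) (n + 1), B x y ^ 2)) := by
    intro x hx
    have hx' : x ∈ Icc (n : ℝ) (n + 1) := Ioc_subset_Icc_self hx
    refine mul_le_mul' ?_ ?_
    · apply ENNReal.ofReal_le_ofReal
      rw [← div_eq_mul_inv, inv_le_comm₀ (by positivity) (by positivity), inv_div,
        div_le_iff₀ (by norm_num)]
      have : ((n : ℝ) - x) ^ 2 ≤ 1 := by nlinarith [hx'.1, hx'.2]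
      nlinarith [sq_nonneg ((n : ℝ) - 2 * x)]
    · refine (pow_le_pow_left' (pointwise_step β M q hqm hqd b0 b1 g gm g1 e x (H x hx')) 2).trans ?_
      refine (sq_add_le _ _).trans (mul_le_mul' le_rfl (add_le_add le_rfl ?_))
      refine le_trans (pow_le_pow_left' ?_ 2) (lintegral_sq_le (B x) n
        (hBm.comp (by fun_prop : Measurable fun y : ℝ => (x, y))).aemeasurable)
      apply lintegral_mono_set
      rw [uIoc]
      exact Ioc_subset_Ioc (le_min he.1 hx'.1) (max_le he.2 hx'.2)
  refine (setLIntegral_mono' measurableSet_Ioc step).trans ?_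
  rw [lintegral_const_mul' _ _ ENNReal.ofReal_ne_top, lintegral_const_mul' _ _ (by norm_num)]
  have e1 : ∫⁻ x in Ioc (n : ℝ) (n + 1), (A x ^ 2 + ∫⁻ y in Ioc (n : ℝ) (n + 1), B x y ^ 2) ≤
      7 * N + 7 * N := by
    rw [lintegral_add_left (hAm.pow_const 2)]
    refine add_le_add ((setLIntegral_le_lintegral _ _).trans hA2) ?_
    rw [lintegral_lintegral_swap (hBm.pow_const 2).aemeasurable]
    calc _ ≤ ∫⁻ y in Ioc (n : ℝ) (n + 1), 7 * N :=
          lintegral_mono fun y => (setLIntegral_le_lintegral _ _).trans (hB2 y)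
      _ = 7 * N := by simp
  calc _ ≤ ENNReal.ofReal (3 * (1 + (n : ℝ) ^ 2)⁻¹) * (2 * (7 * N + 7 * N)) :=
        mul_le_mul' le_rfl (mul_le_mul' le_rfl e1)
    _ = _ := by ring

noncomputable def EH (h : SchwartzMap ℝ ℂ) : ℝ :=
  (∫ k : ℝ, ‖h k‖ ^ 2) + ∫ k : ℝ, ‖deriv (h : ℝ → ℂ) k‖ ^ 2

theorem sch_tendsto (h : SchwartzMap ℝ ℂ) : Tendsto h (cocompact ℝ) (𝓝 0) :=
  h.toZeroAtInfty.zero_at_infty'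

theorem sch_deriv (h : SchwartzMap ℝ ℂ) :
    ((SchwartzMap.derivCLM ℝ ℂ h : SchwartzMap ℝ ℂ) : ℝ → ℂ) = deriv (h : ℝ → ℂ) := by
  ext x
  simp

theorem sch_sq_int (h : SchwartzMap ℝ ℂ) : Integrable (fun k => ‖h k‖ ^ 2) :=
  (h.memLp 2 volume).integrable_norm_pow (by norm_num)

theorem sch_sq_int' (h : SchwartzMap ℝ ℂ) : Integrable (fun k => ‖deriv (h : ℝ → ℂ) k‖ ^ 2) := by
  rw [← sch_deriv]
  exact sch_sq_int _

theorem sch_int' (h : SchwartzMap ℝ ℂ) : Integrable (deriv (h : ℝ → ℂ)) := by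
  rw [← sch_deriv]
  exact SchwartzMap.integrable _

theorem sch_meas' (h : SchwartzMap ℝ ℂ) : Continuous (deriv (h : ℝ → ℂ)) := by
  rw [← sch_deriv]
  exact SchwartzMap.continuous _

theorem sch_memLp' (h : SchwartzMap ℝ ℂ) : MemLp (deriv (h : ℝ → ℂ)) 2 := by
  rw [← sch_deriv]
  exact SchwartzMap.memLp _ 2 volume

theorem EH_nonneg (h : SchwartzMap ℝ ℂ) : 0 ≤ EH h := by
  unfold EH; positivity

theorem sup_bound (h : SchwartzMap ℝ ℂ) (k : ℝ) : ‖h k‖ ^ 2 ≤ EH h := by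
  have hIntg : Integrable (fun k => ‖h k‖ ^ 2 + ‖deriv (h : ℝ → ℂ) k‖ ^ 2) :=
    (sch_sq_int h).add (sch_sq_int' h)
  have hb : ∀ k : ℝ, ‖2 * inner ℝ (h k) (deriv (h : ℝ → ℂ) k)‖ ≤
      ‖h k‖ ^ 2 + ‖deriv (h : ℝ → ℂ) k‖ ^ 2 := by
    intro k
    rw [norm_mul]
    have := norm_inner_le_norm (𝕜 := ℝ) (h k) (deriv (h : ℝ → ℂ) k)
    norm_num
    norm_num at this
    nlinarith [sq_nonneg (‖h k‖ - ‖deriv (h : ℝ → ℂ) k‖)]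
  have hi : Integrable (fun k => 2 * inner ℝ (h k) (deriv (h : ℝ → ℂ) k)) := by
    refine hIntg.mono' ?_ (Eventually.of_forall hb)
    apply Continuous.aestronglyMeasurable
    exact continuous_const.mul (h.continuous.inner (sch_meas' h))
  have ftc := integral_Iic_of_hasDerivAt_of_tendsto' (a := k) (m := 0)
    (f := fun k => ‖h k‖ ^ 2) (f' := fun k => 2 * inner ℝ (h k) (deriv (h : ℝ → ℂ) k))
    (fun x _ => (h.differentiableAt.hasDerivAt).norm_sq) hi.integrableOn (by
      have := (((sch_tendsto h).mono_left atBot_le_cocompact).norm).pow 2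
      simpa using this)
  rw [sub_zero] at ftc
  rw [← ftc]
  refine (le_abs_self _).trans ((norm_integral_le_of_norm_le hIntg.integrableOn
    (Eventually.of_forall hb)).trans ?_)
  refine (setIntegral_le_integral hIntg (Eventually.of_forall fun k => by positivity)).trans ?_
  rw [integral_add (sch_sq_int h) (sch_sq_int' h)]
  rfl

theorem sup_bound' (h : SchwartzMap ℝ ℂ) (k : ℝ) : ‖h k‖ ≤ Real.sqrt (EH h) :=
  Real.le_sqrt_of_sq_le (sup_bound h k)

theorem cauchy_int (τ c : ℝ) (hτ : 0 < τ) :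
    Integrable (fun k : ℝ => (1 + (τ * (k + c)) ^ 2)⁻¹) ∧
    ∫ k : ℝ, (1 + (τ * (k + c)) ^ 2)⁻¹ = τ⁻¹ * Real.pi := by
  constructor
  · have h1 := (integrable_inv_one_add_sq).comp_mul_left' hτ.ne'
    exact h1.comp_add_right c
  · rw [integral_add_right_eq_self (fun k : ℝ => (1 + (τ * k) ^ 2)⁻¹) c,
      Measure.integral_comp_mul_left (fun k : ℝ => (1 + k ^ 2)⁻¹) τ, integral_univ_inv_one_add_sq,
      abs_of_pos (inv_pos.mpr hτ), smul_eq_mul]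

noncomputable def ph (x t : ℝ) (k : ℝ) : ℂ :=
  Complex.exp (Complex.I * (k : ℂ) * (x : ℂ)) * Complex.exp (Complex.I * (k : ℂ) ^ 2 * (t : ℂ))

theorem norm_cexp_sq (k t : ℝ) : ‖Complex.exp (Complex.I * (k : ℂ) ^ 2 * (t : ℂ))‖ = 1 := by
  have := norm_cexp_I (k ^ 2) t
  push_cast at this
  exact this

theorem norm_ph (x t k : ℝ) : ‖ph x t k‖ = 1 := by
  rw [ph, norm_mul, norm_cexp_I, norm_cexp_sq, one_mul]

theorem ph_cont (x t : ℝ) : Continuous (ph x t) := by unfold ph; fun_prop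

theorem ph_deriv (x t k : ℝ) :
    HasDerivAt (ph x t) (Complex.I * ((x : ℂ) + 2 * k * t) * ph x t k) k := by
  have h0 : HasDerivAt (fun y : ℝ => (y : ℂ)) 1 k := Complex.ofRealCLM.hasDerivAt
  have h1 : HasDerivAt (fun y : ℝ => Complex.I * (y : ℂ) * (x : ℂ)) (Complex.I * 1 * x) k :=
    (h0.const_mul _).mul_const _
  have h2 : HasDerivAt (fun y : ℝ => Complex.I * (y : ℂ) ^ 2 * (t : ℂ))
      (Complex.I * ((2 : ℕ) * (k : ℂ) ^ (2 - 1) * 1) * t) k :=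
    ((h0.pow 2).const_mul _).mul_const _
  have := h1.cexp.mul h2.cexp
  refine this.congr_deriv ?_
  simp only [ph, Nat.cast_ofNat, Nat.add_one_sub_one, pow_one, mul_one]
  ring

theorem norm_D (t s : ℝ) : ‖(1 : ℂ) + 2 * Complex.I * t * s ^ 2‖ ^ 2 = 1 + 4 * t ^ 2 * s ^ 4 := by
  rw [← Complex.normSq_eq_norm_sq]
  have : (1 : ℂ) + 2 * Complex.I * t * s ^ 2 = ((1 : ℝ) : ℂ) + ((2 * t * s ^ 2 : ℝ) : ℂ) * Complex.I := by
    push_cast; ring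
  rw [this, Complex.normSq_add_mul_I]
  ring

theorem D_ne (t s : ℝ) : (1 : ℂ) + 2 * Complex.I * t * s ^ 2 ≠ 0 := by
  intro h0
  have := norm_D t s
  rw [h0] at this
  norm_num at this
  nlinarith [sq_nonneg (t * s ^ 2)]

theorem mu_bound (τ s : ℝ) (hτ : 0 < τ) :
    ‖(s : ℂ) / ((1 : ℂ) + 2 * Complex.I * ((τ ^ 2 : ℝ) : ℂ) * s ^ 2)‖ ^ 2 ≤
      τ⁻¹ ^ 2 * (1 + (τ * s) ^ 2)⁻¹ := by
  rw [norm_div, div_pow, norm_D, Complex.norm_real, Real.norm_eq_abs, sq_abs]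
  rw [← mul_inv_le_iff₀ (by positivity), inv_inv, inv_pow, div_mul_eq_mul_div,
    div_le_iff₀ (by positivity), ← div_eq_inv_mul, le_div_iff₀ (by positivity)]
  nlinarith [sq_nonneg (τ ^ 2 * s ^ 2), sq_nonneg (τ ^ 2 * s ^ 2 - 1)]

theorem nu_bound (τ s : ℝ) :
    ‖4 * Complex.I * ((τ ^ 2 : ℝ) : ℂ) * s ^ 2 /
      ((1 : ℂ) + 2 * Complex.I * ((τ ^ 2 : ℝ) : ℂ) * s ^ 2) ^ 2‖ ≤
      4 * (1 + (τ * s) ^ 2)⁻¹ := by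
  rw [norm_div, norm_pow, norm_D]
  have : ‖4 * Complex.I * ((τ ^ 2 : ℝ) : ℂ) * s ^ 2‖ = 4 * τ ^ 2 * s ^ 2 := by
    rw [norm_mul, norm_mul, norm_mul, Complex.norm_I, norm_pow, Complex.norm_real, Complex.norm_real,
      Real.norm_eq_abs, Real.norm_eq_abs, sq_abs, abs_of_nonneg (sq_nonneg τ)]
    norm_num
  rw [this, ← div_eq_mul_inv, div_le_div_iff₀ (by positivity) (by positivity)]
  nlinarith [sq_nonneg (τ ^ 2 * s ^ 2), sq_nonneg (τ ^ 2 * s ^ 2 - 1)]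

theorem osc_bound (x t A : ℝ) (ht : 1 ≤ t) (a : ℝ → ℂ) (ha : Differentiable ℝ a)
    (a0 : ∀ k, ‖a k‖ ≤ A) (a1 : ∀ k, ‖deriv a k‖ ≤ A) (h : SchwartzMap ℝ ℂ) :
    ‖∫ k in Ioi (0 : ℝ), ph x t k * a k * h k‖ ≤ 18 * A * (Real.sqrt t)⁻¹ * Real.sqrt (EH h) := by
  set N := Real.sqrt (EH h) with hN
  have hA : 0 ≤ A := (norm_nonneg _).trans (a0 0)
  have hN0 : 0 ≤ N := Real.sqrt_nonneg _
  rcases hN0.eq_or_lt with hz | hNpos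
  · have : ∀ k, h k = 0 := fun k => by
      have := sup_bound' h k
      rw [← hN, ← hz] at this
      exact norm_le_zero_iff.mp this
    simp [this, ← hz]
  set τ := Real.sqrt t with hτ
  have htτ : t = τ ^ 2 := (Real.sq_sqrt (by linarith)).symm
  have hτ1 : 1 ≤ τ := by rw [hτ]; exact Real.one_le_sqrt.mpr ht
  have hτ0 : 0 < τ := by linarith
  have ht0 : 0 < t := by linarith
  have hN2 : N ^ 2 = EH h := Real.sq_sqrt (EH_nonneg h)
  set c := x / (2 * t) with hc
  -- abbreviations
  set μ : ℝ → ℂ := fun k => ((k + c : ℝ) : ℂ) /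
    ((1 : ℂ) + 2 * Complex.I * ((τ ^ 2 : ℝ) : ℂ) * ((k + c : ℝ) : ℂ) ^ 2) with hμ
  set ν : ℝ → ℂ := fun k => 4 * Complex.I * ((τ ^ 2 : ℝ) : ℂ) * ((k + c : ℝ) : ℂ) ^ 2 /
    ((1 : ℂ) + 2 * Complex.I * ((τ ^ 2 : ℝ) : ℂ) * ((k + c : ℝ) : ℂ) ^ 2) ^ 2 with hν
  set R : ℝ → ℝ := fun k => (1 + (τ * (k + c)) ^ 2)⁻¹ with hR
  have hR0 : ∀ k, 0 < R k := fun k => by simp only [hR]; positivity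
  have hR1 : ∀ k, R k ≤ 1 := fun k => by
    simp only [hR]; exact inv_le_one_of_one_le₀ (by nlinarith [sq_nonneg (τ * (k + c))])
  have hμb : ∀ k, ‖μ k‖ ^ 2 ≤ τ⁻¹ ^ 2 * R k := fun k => mu_bound τ (k + c) hτ0
  have hνb : ∀ k, ‖ν k‖ ≤ 4 * R k := fun k => nu_bound τ (k + c)
  have hμ1 : ∀ k, ‖μ k‖ ≤ τ⁻¹ := fun k => by
    apply le_of_sq_le_sq _ (by positivity)
    refine (hμb k).trans ?_
    have := hR1 k
    have h2 : 0 ≤ τ⁻¹ ^ 2 := by positivity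
    nlinarith
  have hDne : ∀ k : ℝ, (1 : ℂ) + 2 * Complex.I * ((τ ^ 2 : ℝ) : ℂ) * ((k + c : ℝ) : ℂ) ^ 2 ≠ 0 :=
    fun k => D_ne (τ ^ 2) (k + c)
  have hμd : ∀ k, HasDerivAt μ (1 / ((1 : ℂ) + 2 * Complex.I * ((τ ^ 2 : ℝ) : ℂ) *
      ((k + c : ℝ) : ℂ) ^ 2) - ν k) k := by
    intro k
    have h0 : HasDerivAt (fun y : ℝ => ((y + c : ℝ) : ℂ)) 1 k := by
      have : HasDerivAt (fun y : ℝ => y + c) 1 k := (hasDerivAt_id k).add_const c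
      simpa using this.ofReal_comp
    have h1 : HasDerivAt (fun y : ℝ => (1 : ℂ) + 2 * Complex.I * ((τ ^ 2 : ℝ) : ℂ) *
        ((y + c : ℝ) : ℂ) ^ 2) (2 * Complex.I * ((τ ^ 2 : ℝ) : ℂ) *
          ((2 : ℕ) * ((k + c : ℝ) : ℂ) ^ (2 - 1) * 1)) k :=
      ((h0.pow 2).const_mul _).const_add _
    have h2 := h0.div h1 (hDne k)
    refine h2.congr_deriv ?_
    have hD := hDne k
    simp only [hν, Nat.cast_ofNat, Nat.add_one_sub_one, pow_one, mul_one]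
    field_simp
    ring
  have hμc : Continuous μ := continuous_iff_continuousAt.mpr fun k => (hμd k).continuousAt
  have hνc : Continuous ν := by
    simp only [hν]
    apply Continuous.div (by fun_prop) (by fun_prop)
    intro k
    exact pow_ne_zero _ (hDne k)
  set f : ℝ → ℂ := fun k => μ k * ph x t k * a k * h k with hf
  set rem : ℝ → ℂ := fun k => ν k * (ph x t k * a k * h k) -
    μ k * ph x t k * (deriv a k * h k + a k * deriv (h : ℝ → ℂ) k) with hrem
  have hfd : ∀ k, HasDerivAt f (ph x t k * a k * h k - rem k) k := by
    intro k
    have := (((hμd k).mul (ph_deriv x t k)).mul (ha k).hasDerivAt).mul (h.hasDerivAt k)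
    refine this.congr_deriv ?_
    have hD := hDne k
    have hphase : ((x : ℂ) + 2 * k * t) = 2 * ((τ ^ 2 : ℝ) : ℂ) * ((k + c : ℝ) : ℂ) := by
      rw [← htτ, hc]
      push_cast
      have : (t : ℂ) ≠ 0 := by exact_mod_cast ht0.ne'
      field_simp
      ring
    have hone : 1 / ((1 : ℂ) + 2 * Complex.I * ((τ ^ 2 : ℝ) : ℂ) * ((k + c : ℝ) : ℂ) ^ 2) +
        μ k * (Complex.I * ((x : ℂ) + 2 * k * t)) = 1 := by
      rw [hphase]
      simp only [hμ]
      field_simp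
    simp only [hrem, Pi.mul_apply]
    linear_combination (ph x t k * a k * h k) * hone
  have ham : Measurable (deriv a) := measurable_deriv a
  have hmain_int : Integrable (fun k => ph x t k * a k * h k) := by
    apply int_bdd_mul (fun k => ph x t k * a k) h A
      ((ph_cont x t).measurable.mul ha.continuous.measurable) _ h.integrable
    intro k
    rw [norm_mul, norm_ph, one_mul]
    exact a0 k
  -- the bound
  have hS : Integrable (fun k => ‖h k‖ ^ 2 + ‖deriv (h : ℝ → ℂ) k‖ ^ 2) :=
    (sch_sq_int h).add (sch_sq_int' h)
  set B : ℝ → ℝ := fun k => (4 * A * N + A * τ⁻¹ * N) * R k +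
    (A * τ⁻¹ * (2 * N)⁻¹) * (‖h k‖ ^ 2 + ‖deriv (h : ℝ → ℂ) k‖ ^ 2) with hB
  obtain ⟨hRi, hRv⟩ := cauchy_int τ c hτ0
  have hBi : Integrable B := (hRi.const_mul _).add (hS.const_mul _)
  have hmul : ∀ k (z : ℂ), ‖μ k‖ * ‖z‖ ≤ τ⁻¹ * (R k * N + ‖z‖ ^ 2 / N) / 2 := by
    intro k z
    have e1 : ‖μ k‖ * ‖z‖ = τ⁻¹ * ((τ * ‖μ k‖) * ‖z‖) := by field_simp
    have e2 : (τ * ‖μ k‖) ^ 2 ≤ R k := by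
      rw [mul_pow]
      have := hμb k
      calc τ ^ 2 * ‖μ k‖ ^ 2 ≤ τ ^ 2 * (τ⁻¹ ^ 2 * R k) := by gcongr
        _ = R k := by field_simp
    rw [e1, mul_div_assoc]
    apply mul_le_mul_of_nonneg_left _ (by positivity)
    rw [le_div_iff₀ (by norm_num)]
    have e3 : (τ * ‖μ k‖) * ‖z‖ * 2 ≤ (τ * ‖μ k‖) ^ 2 * N + ‖z‖ ^ 2 / N := by
      have : 0 ≤ (τ * ‖μ k‖ * N - ‖z‖) ^ 2 / N := by positivity
      have e4 : (τ * ‖μ k‖ * N - ‖z‖) ^ 2 / N =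
        (τ * ‖μ k‖) ^ 2 * N + ‖z‖ ^ 2 / N - (τ * ‖μ k‖) * ‖z‖ * 2 := by field_simp; ring
      linarith
    nlinarith
  have hremb : ∀ k, ‖rem k‖ ≤ B k := by
    intro k
    have n1 : ‖ν k * (ph x t k * a k * h k)‖ ≤ 4 * R k * (A * N) := by
      rw [norm_mul, norm_mul, norm_mul, norm_ph, one_mul]
      exact mul_le_mul (hνb k) (mul_le_mul (a0 k) (sup_bound' h k) (norm_nonneg _) hA)
        (by positivity) (by have := hR0 k; positivity)
    have n2 : ‖μ k * ph x t k * (deriv a k * h k + a k * deriv (h : ℝ → ℂ) k)‖ ≤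
        A * (‖μ k‖ * ‖h k‖) + A * (‖μ k‖ * ‖deriv (h : ℝ → ℂ) k‖) := by
      rw [norm_mul, norm_mul, norm_ph, mul_one]
      calc _ ≤ ‖μ k‖ * (A * ‖h k‖ + A * ‖deriv (h : ℝ → ℂ) k‖) := by
            apply mul_le_mul_of_nonneg_left _ (norm_nonneg _)
            refine (norm_add_le _ _).trans ?_
            rw [norm_mul, norm_mul]
            exact add_le_add (mul_le_mul_of_nonneg_right (a1 k) (norm_nonneg _))
              (mul_le_mul_of_nonneg_right (a0 k) (norm_nonneg _))
        _ = _ := by ring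
    have m1 := mul_le_mul_of_nonneg_left (hmul k (h k)) hA
    have m2 := mul_le_mul_of_nonneg_left (hmul k (deriv (h : ℝ → ℂ) k)) hA
    refine (norm_sub_le _ _).trans ?_
    refine (add_le_add n1 (n2.trans (add_le_add m1 m2))).trans (le_of_eq ?_)
    simp only [hB]
    field_simp
    ring
  have hremm : AEStronglyMeasurable rem volume := by
    apply Measurable.aestronglyMeasurable
    have m1 := hμc.measurable
    have m2 := hνc.measurable
    have m3 := (ph_cont x t).measurable
    have m4 := ha.continuous.measurable
    have m5 := h.continuous.measurable
    have m6 := (sch_meas' h).measurable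
    exact (m2.mul ((m3.mul m4).mul m5)).sub ((m1.mul m3).mul ((ham.mul m5).add (m4.mul m6)))
  have hremi : Integrable rem := hBi.mono' hremm (Eventually.of_forall hremb)
  have hft : Tendsto f atTop (𝓝 0) := by
    have h1 : Tendsto (fun k => τ⁻¹ * A * ‖h k‖) atTop (𝓝 0) := by
      have := (((sch_tendsto h).mono_left atTop_le_cocompact).norm).const_mul (τ⁻¹ * A)
      simpa using this
    refine squeeze_zero_norm (fun k => ?_) h1
    simp only [hf]
    rw [norm_mul, norm_mul, norm_mul, norm_ph, mul_one]
    exact mul_le_mul_of_nonneg_right (mul_le_mul (hμ1 k) (a0 k) (norm_nonneg _) (by positivity))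
      (norm_nonneg _)
  have ftc := integral_Ioi_of_hasDerivAt_of_tendsto' (a := (0 : ℝ)) (fun k _ => hfd k)
    (hmain_int.sub hremi).integrableOn hft
  rw [integral_sub hmain_int.integrableOn hremi.integrableOn] at ftc
  have heq : ∫ k in Ioi (0 : ℝ), ph x t k * a k * h k = (∫ k in Ioi (0 : ℝ), rem k) - f 0 := by
    linear_combination ftc
  rw [heq]
  have hf0 : ‖f 0‖ ≤ τ⁻¹ * A * N := by
    simp only [hf]
    rw [norm_mul, norm_mul, norm_mul, norm_ph, mul_one]
    exact mul_le_mul (mul_le_mul (hμ1 0) (a0 0) (norm_nonneg _) (by positivity))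
      (sup_bound' h 0) (norm_nonneg _) (by positivity)
  have hrint : ‖∫ k in Ioi (0 : ℝ), rem k‖ ≤ ∫ k, B k := by
    refine (norm_integral_le_of_norm_le hBi.integrableOn (Eventually.of_forall hremb)).trans ?_
    refine setIntegral_le_integral hBi (Eventually.of_forall fun k => ?_)
    exact (norm_nonneg _).trans (hremb k)
  have hBv : ∫ k, B k = (4 * A * N + A * τ⁻¹ * N) * (τ⁻¹ * Real.pi) +
      (A * τ⁻¹ * (2 * N)⁻¹) * N ^ 2 := by
    simp only [hB]
    rw [integral_add (hRi.const_mul _) (hS.const_mul _), integral_const_mul, integral_const_mul,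
      hRv, integral_add (sch_sq_int h) (sch_sq_int' h), hN2]
    rfl
  have hpi := Real.pi_lt_d2
  have hpi0 := Real.pi_pos
  have hτi : τ⁻¹ ≤ 1 := inv_le_one_of_one_le₀ hτ1
  have hτi0 : 0 < τ⁻¹ := by positivity
  calc _ ≤ ‖∫ k in Ioi (0 : ℝ), rem k‖ + ‖f 0‖ := norm_sub_le _ _
    _ ≤ (4 * A * N + A * τ⁻¹ * N) * (τ⁻¹ * Real.pi) + (A * τ⁻¹ * (2 * N)⁻¹) * N ^ 2 +
        τ⁻¹ * A * N := add_le_add (hrint.trans hBv.le) hf0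
    _ = A * τ⁻¹ * N * ((4 + τ⁻¹) * Real.pi + 1 / 2 + 1) := by field_simp
    _ ≤ A * τ⁻¹ * N * 18 := by
        apply mul_le_mul_of_nonneg_left _ (by positivity)
        nlinarith
    _ = _ := by ring

theorem ET_ibp (x : ℝ) (G G' : ℝ → ℂ) (hd : ∀ k, HasDerivAt G (G' k) k) (hG : Integrable G)
    (hG' : Integrable G') : Complex.I * x * ET G x = - ET G' x := by
  have hE : ∀ k : ℝ, HasDerivAt (fun k : ℝ => Complex.exp (Complex.I * (k : ℂ) * (x : ℂ)))
      (Complex.exp (Complex.I * (k : ℂ) * (x : ℂ)) * (Complex.I * 1 * x)) k := by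
    intro k
    have h0 : HasDerivAt (fun y : ℝ => (y : ℂ)) 1 k := Complex.ofRealCLM.hasDerivAt
    exact ((h0.const_mul Complex.I).mul_const (x : ℂ)).cexp
  have i1 := int_exp_mul G x hG
  have i2 := int_exp_mul G' x hG'
  have hi : Integrable (fun k : ℝ => Complex.I * x *
      (Complex.exp (Complex.I * (k : ℂ) * (x : ℂ)) * G k) +
      Complex.exp (Complex.I * (k : ℂ) * (x : ℂ)) * G' k) := (i1.const_mul _).add i2
  have h := integral_eq_zero_of_hasDerivAt_of_integrable
    (f := fun k : ℝ => Complex.exp (Complex.I * (k : ℂ) * (x : ℂ)) * G k)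
    (fun k => ((hE k).mul (hd k)).congr_deriv
      (by ring : _ = Complex.I * x * (Complex.exp (Complex.I * (k : ℂ) * (x : ℂ)) * G k) +
      Complex.exp (Complex.I * (k : ℂ) * (x : ℂ)) * G' k)) hi i1
  rw [integral_add (i1.const_mul _) i2, integral_const_mul] at h
  unfold ET
  linear_combination h

theorem ET_add (x : ℝ) (f g : ℝ → ℂ) (hf : Integrable f) (hg : Integrable g) :
    ET (fun k => f k + g k) x = ET f x + ET g x := by
  unfold ET
  rw [← integral_add (int_exp_mul f x hf) (int_exp_mul g x hg)]
  congr 1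
  ext k
  ring

theorem norm_one_add_I (x : ℝ) : ‖(1 : ℂ) + Complex.I * x‖ ^ 2 = 1 + x ^ 2 := by
  rw [← Complex.normSq_eq_norm_sq]
  have : (1 : ℂ) + Complex.I * x = ((1 : ℝ) : ℂ) + (x : ℂ) * Complex.I := by
    push_cast; ring
  rw [this, Complex.normSq_add_mul_I]
  ring

theorem sq_add3_le (a b c : ENNReal) : (a + b + c) ^ 2 ≤ 4 * (a ^ 2 + b ^ 2 + c ^ 2) := by
  refine (sq_add_le _ _).trans ?_
  calc 2 * ((a + b) ^ 2 + c ^ 2) ≤ 2 * (2 * (a ^ 2 + b ^ 2) + 2 * c ^ 2) := by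
        gcongr
        · exact sq_add_le _ _
        · exact le_mul_of_one_le_left zero_le (by norm_num)
    _ = _ := by ring

theorem lint_sq_lt_top (g : ℝ → ℂ) (g2 : MemLp g 2) : ∫⁻ k : ℝ, ‖g k‖ₑ ^ 2 ≠ ⊤ := by
  have := g2.integrable_norm_pow (by norm_num)
  have h := this.hasFiniteIntegral
  rw [hasFiniteIntegral_iff_enorm] at h
  simpa using h.ne

theorem op_schwartz (β M : ℝ) (hM : 0 < M) (Q : ℝ → ℝ → ℂ)
    (dk : ∀ x : ℝ, Differentiable ℝ (fun k => Q x k))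
    (dx : ∀ k : ℝ, Differentiable ℝ (fun x => Q x k))
    (dxk : ∀ k : ℝ, Differentiable ℝ (fun x => deriv (fun k' => Q x k') k))
    (b00 : ∀ x k : ℝ, jap x ^ β * ‖Q x k‖ ≤ M)
    (b01 : ∀ x k : ℝ, jap x ^ β * ‖deriv (fun k' => Q x k') k‖ ≤ M)
    (b10 : ∀ x k : ℝ, jap x ^ β * ‖deriv (fun x' => Q x' k) x‖ ≤ M)
    (b11 : ∀ x k : ℝ, jap x ^ β * ‖deriv (fun x' => deriv (fun k' => Q x' k') k) x‖ ≤ M)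
    (g : SchwartzMap ℝ ℂ)
    (op : Real.sqrt (∫ x : ℝ, ‖∫ k : ℝ, Complex.exp (Complex.I * (k : ℂ) * (x : ℂ)) *
            (jap x ^ β : ℝ) * Q x k * g k‖ ^ 2) ≤ M * Real.sqrt (∫ k : ℝ, ‖g k‖ ^ 2)) :
    ∫⁻ x : ℝ, ‖ET (fun k => ((jap x ^ β : ℝ) : ℂ) * Q x k * g k) x‖ₑ ^ 2 ≤
      ENNReal.ofReal (M ^ 2) * ∫⁻ k : ℝ, ‖g k‖ₑ ^ 2 := by
  have mQ : ∀ x, Measurable (Q x) := fun x => (dk x).continuous.measurable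
  have mQk : ∀ x, Measurable (fun k => deriv (fun k' => Q x k') k) := fun x => measurable_deriv _
  have gm := g.continuous.measurable
  have g'm := (sch_meas' g).measurable
  have L1 := local_L2 β M Q mQ dx b00 b10 g gm g.integrable (g.memLp 2 volume)
  have L2 := local_L2 β M (fun x k => deriv (fun k' => Q x k') k) mQk dxk b01 b11 g gm
    g.integrable (g.memLp 2 volume)
  have L3 := local_L2 β M Q mQ dx b00 b10 (deriv (g : ℝ → ℂ)) g'm (sch_int' g) (sch_memLp' g)
  have hmeasQ : Measurable (Function.uncurry Q) :=
    measurable_uncurry_of_continuous_of_measurable (fun k => (dx k).continuous) mQ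
  have hmeasQk : Measurable (Function.uncurry (fun x k => deriv (fun k' => Q x k') k)) :=
    measurable_uncurry_of_continuous_of_measurable (fun k => (dxk k).continuous) mQk
  have hw : Measurable (fun p : ℝ × ℝ => ((jap p.1 ^ β : ℝ) : ℂ)) :=
    (Complex.continuous_ofReal.comp ((jap_rpow_continuous β).comp continuous_fst)).measurable
  have hmG : ∀ (q : ℝ → ℝ → ℂ) (f : ℝ → ℂ), Measurable (Function.uncurry q) → Measurable f →
      Measurable (fun x => ET (fun k => ((jap x ^ β : ℝ) : ℂ) * q x k * f k) x) := by
    intro q f hq hf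
    apply meas_ET (fun x k => ((jap x ^ β : ℝ) : ℂ) * q x k * f k)
    exact (hw.mul hq).mul (hf.comp measurable_snd)
  have hwn : ∀ x, ‖((jap x ^ β : ℝ) : ℂ)‖ = jap x ^ β := fun x => by
    rw [Complex.norm_real, Real.norm_of_nonneg (jap_rpow_pos x β).le]
  -- pointwise identity
  have key : ∀ x : ℝ, ‖ET (fun k => ((jap x ^ β : ℝ) : ℂ) * Q x k * g k) x‖ₑ ^ 2 ≤
      4 * (ENNReal.ofReal ((1 + x ^ 2)⁻¹) *
        ‖ET (fun k => ((jap x ^ β : ℝ) : ℂ) * Q x k * g k) x‖ₑ ^ 2 +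
        ENNReal.ofReal ((1 + x ^ 2)⁻¹) *
        ‖ET (fun k => ((jap x ^ β : ℝ) : ℂ) * deriv (fun k' => Q x k') k * g k) x‖ₑ ^ 2 +
        ENNReal.ofReal ((1 + x ^ 2)⁻¹) *
        ‖ET (fun k => ((jap x ^ β : ℝ) : ℂ) * Q x k * deriv (g : ℝ → ℂ) k) x‖ₑ ^ 2) := by
    intro x
    set w : ℂ := ((jap x ^ β : ℝ) : ℂ) with hwd
    have i1 : Integrable (fun k => w * Q x k * g k) :=
      int_bdd_mul (fun k => w * Q x k) g M ((mQ x).const_mul w)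
        (fun k => by rw [norm_mul, hwd, hwn]; exact b00 x k) g.integrable
    have i2 : Integrable (fun k => w * deriv (fun k' => Q x k') k * g k) :=
      int_bdd_mul (fun k => w * deriv (fun k' => Q x k') k) g M ((mQk x).const_mul w)
        (fun k => by rw [norm_mul, hwd, hwn]; exact b01 x k) g.integrable
    have i3 : Integrable (fun k => w * Q x k * deriv (g : ℝ → ℂ) k) :=
      int_bdd_mul (fun k => w * Q x k) _ M ((mQ x).const_mul w)
        (fun k => by rw [norm_mul, hwd, hwn]; exact b00 x k) (sch_int' g)
    have hib := ET_ibp x (fun k => w * Q x k * g k) _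
      (fun k => ((((dk x) k).hasDerivAt.const_mul w).mul (g.hasDerivAt k))) i1 (i2.add i3)
    have hib' : Complex.I * x * ET (fun k => w * Q x k * g k) x =
        -(ET (fun k => w * deriv (fun k' => Q x k') k * g k) x +
          ET (fun k => w * Q x k * deriv (g : ℝ → ℂ) k) x) := by
      rw [← ET_add x _ _ i2 i3]
      exact hib
    set A := ET (fun k => w * Q x k * g k) x
    set B := ET (fun k => w * deriv (fun k' => Q x k') k * g k) x
    set D := ET (fun k => w * Q x k * deriv (g : ℝ → ℂ) k) x
    have e : (1 + Complex.I * x) * A = A + (-B) + (-D) := by linear_combination hib'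
    have e2 : ENNReal.ofReal (1 + x ^ 2) * ‖A‖ₑ ^ 2 ≤ 4 * (‖A‖ₑ ^ 2 + ‖B‖ₑ ^ 2 + ‖D‖ₑ ^ 2) := by
      have : ENNReal.ofReal (1 + x ^ 2) = ‖(1 : ℂ) + Complex.I * x‖ₑ ^ 2 := by
        rw [← norm_one_add_I, ENNReal.ofReal_pow (norm_nonneg _), ofReal_norm]
      rw [this, ← mul_pow, ← enorm_mul, e]
      refine le_trans ?_ (sq_add3_le _ _ _)
      gcongr
      refine (enorm_add_le _ _).trans ?_
      rw [enorm_neg]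
      gcongr
      refine (enorm_add_le _ _).trans ?_
      rw [enorm_neg]
    have hpos : (0 : ℝ) < 1 + x ^ 2 := by positivity
    calc ‖A‖ₑ ^ 2 = ENNReal.ofReal ((1 + x ^ 2)⁻¹) * (ENNReal.ofReal (1 + x ^ 2) * ‖A‖ₑ ^ 2) := by
          rw [← mul_assoc, ← ENNReal.ofReal_mul (by positivity), inv_mul_cancel₀ hpos.ne',
            ENNReal.ofReal_one, one_mul]
      _ ≤ ENNReal.ofReal ((1 + x ^ 2)⁻¹) * (4 * (‖A‖ₑ ^ 2 + ‖B‖ₑ ^ 2 + ‖D‖ₑ ^ 2)) := by gcongr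
      _ = _ := by ring
  have hmr : Measurable (fun x : ℝ => ENNReal.ofReal ((1 + x ^ 2)⁻¹)) := by fun_prop
  have fin : ∫⁻ x : ℝ, ‖ET (fun k => ((jap x ^ β : ℝ) : ℂ) * Q x k * g k) x‖ₑ ^ 2 ≠ ⊤ := by
    have hle := lintegral_mono (μ := volume) key
    have m1 : Measurable (fun x : ℝ => ENNReal.ofReal ((1 + x ^ 2)⁻¹) *
        ‖ET (fun k => ((jap x ^ β : ℝ) : ℂ) * Q x k * g k) x‖ₑ ^ 2) :=
      hmr.mul ((hmG Q g hmeasQ gm).enorm.pow_const 2)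
    have m2 : Measurable (fun x : ℝ => ENNReal.ofReal ((1 + x ^ 2)⁻¹) *
        ‖ET (fun k => ((jap x ^ β : ℝ) : ℂ) * deriv (fun k' => Q x k') k * g k) x‖ₑ ^ 2) :=
      hmr.mul ((hmG _ g hmeasQk gm).enorm.pow_const 2)
    have m12 : Measurable (fun x : ℝ => ENNReal.ofReal ((1 + x ^ 2)⁻¹) *
        ‖ET (fun k => ((jap x ^ β : ℝ) : ℂ) * Q x k * g k) x‖ₑ ^ 2 +
        ENNReal.ofReal ((1 + x ^ 2)⁻¹) *
        ‖ET (fun k => ((jap x ^ β : ℝ) : ℂ) * deriv (fun k' => Q x k') k * g k) x‖ₑ ^ 2) :=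
      m1.add m2
    refine ne_top_of_le_ne_top ?_ hle
    have G1 := lint_sq_lt_top g (g.memLp 2 volume)
    have G2 := lint_sq_lt_top _ (sch_memLp' g)
    rw [lintegral_const_mul' _ _ (by norm_num), lintegral_add_left m12,
      lintegral_add_left m1]
    refine ENNReal.mul_ne_top (by norm_num) (ENNReal.add_ne_top.mpr ⟨ENNReal.add_ne_top.mpr
      ⟨?_, ?_⟩, ?_⟩)
    · exact ne_top_of_le_ne_top (ENNReal.mul_ne_top KL_ne_top
        (ENNReal.mul_ne_top ENNReal.ofReal_ne_top G1)) L1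
    · exact ne_top_of_le_ne_top (ENNReal.mul_ne_top KL_ne_top
        (ENNReal.mul_ne_top ENNReal.ofReal_ne_top G1)) L2
    · exact ne_top_of_le_ne_top (ENNReal.mul_ne_top KL_ne_top
        (ENNReal.mul_ne_top ENNReal.ofReal_ne_top G2)) L3
  have hET : ∀ x : ℝ, ∫ k : ℝ, Complex.exp (Complex.I * (k : ℂ) * (x : ℂ)) *
      (jap x ^ β : ℝ) * Q x k * g k = ET (fun k => ((jap x ^ β : ℝ) : ℂ) * Q x k * g k) x := by
    intro x
    unfold ET
    congr 1
    ext k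
    ring
  simp only [hET] at op
  have conv : ∀ f : ℝ → ℂ, Measurable f →
      ∫ x, ‖f x‖ ^ 2 = (∫⁻ x, ‖f x‖ₑ ^ 2).toReal := by
    intro f hf
    rw [integral_eq_lintegral_of_nonneg_ae (Eventually.of_forall fun x => by positivity)
      (by fun_prop)]
    congr 2
    ext x
    rw [ENNReal.ofReal_pow (norm_nonneg _), ofReal_norm]
  rw [conv _ (hmG Q g hmeasQ gm), conv _ gm] at op
  have G1 := lint_sq_lt_top g (g.memLp 2 volume)
  set a := ∫⁻ x : ℝ, ‖ET (fun k => ((jap x ^ β : ℝ) : ℂ) * Q x k * g k) x‖ₑ ^ 2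
  set b := ∫⁻ k : ℝ, ‖g k‖ₑ ^ 2
  have op2 : a.toReal ≤ M ^ 2 * b.toReal := by
    have := pow_le_pow_left₀ (Real.sqrt_nonneg _) op 2
    rwa [mul_pow, Real.sq_sqrt ENNReal.toReal_nonneg, Real.sq_sqrt ENNReal.toReal_nonneg] at this
  rw [← ENNReal.ofReal_toReal fin, ← ENNReal.ofReal_toReal G1,
    ← ENNReal.ofReal_mul (by positivity)]
  exact ENNReal.ofReal_le_ofReal op2

theorem op_ext (β M : ℝ) (Q : ℝ → ℝ → ℂ) (dx : ∀ k : ℝ, Differentiable ℝ (fun x => Q x k))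
    (mQ : ∀ x, Measurable (Q x))
    (b00 : ∀ x k : ℝ, jap x ^ β * ‖Q x k‖ ≤ M) (h : SchwartzMap ℝ ℂ)
    (gn : ℕ → SchwartzMap ℝ ℂ) (g : ℝ → ℂ)
    (hlim : ∀ k, Tendsto (fun n => gn n k) atTop (𝓝 (g k)))
    (hb : ∀ n k, ‖gn n k‖ ≤ ‖h k‖)
    (hop : ∀ n, ∫⁻ x : ℝ, ‖ET (fun k => ((jap x ^ β : ℝ) : ℂ) * Q x k * gn n k) x‖ₑ ^ 2 ≤
      ENNReal.ofReal (M ^ 2) * ∫⁻ k : ℝ, ‖gn n k‖ₑ ^ 2) :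
    ∫⁻ x : ℝ, ‖ET (fun k => ((jap x ^ β : ℝ) : ℂ) * Q x k * g k) x‖ₑ ^ 2 ≤
      ENNReal.ofReal (M ^ 2) * ∫⁻ k : ℝ, ‖h k‖ₑ ^ 2 := by
  have hmeasQ : Measurable (Function.uncurry Q) :=
    measurable_uncurry_of_continuous_of_measurable (fun k => (dx k).continuous) mQ
  have hw : Measurable (fun p : ℝ × ℝ => ((jap p.1 ^ β : ℝ) : ℂ)) :=
    (Complex.continuous_ofReal.comp ((jap_rpow_continuous β).comp continuous_fst)).measurable
  have hmG : ∀ f : ℝ → ℂ, Measurable f →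
      Measurable (fun x => ET (fun k => ((jap x ^ β : ℝ) : ℂ) * Q x k * f k) x) := by
    intro f hf
    apply meas_ET (fun x k => ((jap x ^ β : ℝ) : ℂ) * Q x k * f k)
    exact (hw.mul hmeasQ).mul (hf.comp measurable_snd)
  have hwn : ∀ x, ‖((jap x ^ β : ℝ) : ℂ)‖ = jap x ^ β := fun x => by
    rw [Complex.norm_real, Real.norm_of_nonneg (jap_rpow_pos x β).le]
  have hpt : ∀ x, Tendsto (fun n => ET (fun k => ((jap x ^ β : ℝ) : ℂ) * Q x k * gn n k) x) atTop
      (𝓝 (ET (fun k => ((jap x ^ β : ℝ) : ℂ) * Q x k * g k) x)) := by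
    intro x
    unfold ET
    apply tendsto_integral_of_dominated_convergence (fun k => M * ‖h k‖)
    · intro n
      apply Measurable.aestronglyMeasurable
      have := (gn n).continuous.measurable
      have := mQ x
      fun_prop
    · exact h.integrable.norm.const_mul M
    · intro n
      refine Eventually.of_forall fun k => ?_
      rw [norm_mul, norm_cexp_I, one_mul, norm_mul, norm_mul, hwn]
      exact mul_le_mul (b00 x k) (hb n k) (norm_nonneg _)
        ((mul_nonneg (jap_rpow_pos x β).le (norm_nonneg _)).trans (b00 x k))
    · exact Eventually.of_forall fun k => ((hlim k).const_mul _).const_mul _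
  have hpt2 : ∀ x, ‖ET (fun k => ((jap x ^ β : ℝ) : ℂ) * Q x k * g k) x‖ₑ ^ 2 =
      liminf (fun n => ‖ET (fun k => ((jap x ^ β : ℝ) : ℂ) * Q x k * gn n k) x‖ₑ ^ 2) atTop := by
    intro x
    refine (Tendsto.liminf_eq ?_).symm
    exact ((ENNReal.continuous_pow 2).tendsto _).comp ((continuous_enorm.tendsto _).comp (hpt x))
  simp_rw [hpt2]
  refine (lintegral_liminf_le fun n => (hmG _ (gn n).continuous.measurable).enorm.pow_const 2).trans
    ?_
  refine (liminf_le_liminf (Eventually.of_forall fun n => (hop n).trans (b := _)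
    (c := ENNReal.ofReal (M ^ 2) * ∫⁻ k : ℝ, ‖h k‖ₑ ^ 2) ?_)).trans ?_
  · gcongr with k
    exact enorm_le_iff_norm_le.mpr (hb n k)
  · simp

theorem exists_seq (t : ℝ) (h : SchwartzMap ℝ ℂ) : ∃ gn : ℕ → SchwartzMap ℝ ℂ,
    (∀ k, Tendsto (fun n => gn n k) atTop (𝓝 ((Ioi (0 : ℝ)).indicator
      (fun k : ℝ => Complex.exp (Complex.I * (k : ℂ) ^ 2 * (t : ℂ)) * h k) k))) ∧
    ∀ n k, ‖gn n k‖ ≤ ‖h k‖ := by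
  let χ : ∀ n : ℕ, ContDiffBump ((n : ℝ) + 2) := fun n =>
    { rIn := (n : ℝ) + 2 - ((n : ℝ) + 2)⁻¹
      rOut := (n : ℝ) + 2
      rIn_pos := by
        have : ((n : ℝ) + 2)⁻¹ ≤ 1 := inv_le_one_of_one_le₀ (by linarith [n.cast_nonneg (α := ℝ)])
        have := n.cast_nonneg (α := ℝ)
        linarith
      rIn_lt_rOut := by
        have : 0 < ((n : ℝ) + 2)⁻¹ := by positivity
        linarith }
  let f : ℕ → ℝ → ℂ := fun n k => ((χ n k : ℝ) : ℂ) *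
    (Complex.exp (Complex.I * (k : ℂ) ^ 2 * (t : ℂ)) * h k)
  have hc : ∀ n, HasCompactSupport (f n) := by
    intro n
    have h1 : HasCompactSupport (fun k => ((χ n k : ℝ) : ℂ)) :=
      (χ n).hasCompactSupport.comp_left (g := fun y : ℝ => (y : ℂ)) (by simp)
    exact h1.mul_right
  have hs : ∀ n, ContDiff ℝ ((⊤ : ℕ∞) : WithTop ℕ∞) (f n) := by
    intro n
    have e0 : ContDiff ℝ ((⊤ : ℕ∞) : WithTop ℕ∞) (fun k : ℝ => (k : ℂ)) :=
      Complex.ofRealCLM.contDiff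
    have e1 : ContDiff ℝ ((⊤ : ℕ∞) : WithTop ℕ∞) (fun k => ((χ n k : ℝ) : ℂ)) :=
      Complex.ofRealCLM.contDiff.comp (χ n).contDiff
    have e2 : ContDiff ℝ ((⊤ : ℕ∞) : WithTop ℕ∞)
        (fun k : ℝ => Complex.exp (Complex.I * (k : ℂ) ^ 2 * (t : ℂ))) := by
      fun_prop
    exact e1.mul (e2.mul (h.smooth _))
  refine ⟨fun n => (hc n).toSchwartzMap (hs n), fun k => ?_, fun n k => ?_⟩
  · rcases le_or_gt k 0 with hk | hk
    · rw [indicator_of_notMem (by simpa using hk)]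
      refine tendsto_const_nhds.congr fun n => ?_
      have : χ n k = 0 := by
        apply (χ n).zero_of_le_dist
        rw [Real.dist_eq, abs_sub_comm]
        refine le_trans ?_ (le_abs_self _)
        show (n : ℝ) + 2 ≤ _
        linarith
      show (0 : ℂ) = f n k
      simp [f, this]
    · rw [indicator_of_mem (by simpa using hk)]
      refine tendsto_const_nhds.congr' ?_
      have ht1 : Tendsto (fun n : ℕ => (n : ℝ) + 2) atTop atTop :=
        tendsto_atTop_add_const_right _ _ tendsto_natCast_atTop_atTop
      filter_upwards [ht1.eventually_ge_atTop k,
        (tendsto_inv_atTop_zero.comp ht1).eventually (gt_mem_nhds hk)] with n h1 h2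
      have h2' : ((n : ℝ) + 2)⁻¹ < k := h2
      have : χ n k = 1 := by
        apply (χ n).one_of_mem_closedBall
        rw [Metric.mem_closedBall, Real.dist_eq, abs_sub_comm, abs_of_nonneg (by linarith)]
        show _ ≤ (n : ℝ) + 2 - ((n : ℝ) + 2)⁻¹
        linarith
      show _ = f n k
      simp [f, this]
  · show ‖f n k‖ ≤ _
    simp only [f]
    rw [norm_mul, norm_mul, norm_cexp_sq, one_mul, Complex.norm_real,
      Real.norm_of_nonneg (χ n).nonneg]
    exact mul_le_of_le_one_left (norm_nonneg _) (χ n).le_one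

theorem near_bound (β M M' x : ℝ) (h : (jap x ^ β)⁻¹ * M < M') :
    ∃ ε > 0, ∀ y ∈ Metric.ball x ε, (jap y ^ β)⁻¹ * M < M' := by
  have hc : ContinuousAt (fun y => (jap y ^ β)⁻¹ * M) x :=
    ((jap_rpow_continuous β).inv₀ (fun y => (jap_rpow_pos y β).ne')).continuousAt.mul_const M
  have := hc.eventually (gt_mem_nhds h)
  exact Metric.eventually_nhds_iff_ball.mp this

theorem D2_bound (β M x t : ℝ) (ht : 1 ≤ t) (Q : ℝ → ℝ → ℂ)
    (dk : ∀ x : ℝ, Differentiable ℝ (fun k => Q x k))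
    (dx : ∀ k : ℝ, Differentiable ℝ (fun x => Q x k))
    (dxk : ∀ k : ℝ, Differentiable ℝ (fun x => deriv (fun k' => Q x k') k))
    (b00 : ∀ x k : ℝ, jap x ^ β * ‖Q x k‖ ≤ M)
    (b10 : ∀ x k : ℝ, jap x ^ β * ‖deriv (fun x' => Q x' k) x‖ ≤ M)
    (b11 : ∀ x k : ℝ, jap x ^ β * ‖deriv (fun x' => deriv (fun k' => Q x' k') k) x‖ ≤ M)
    (h : SchwartzMap ℝ ℂ) :
    jap x ^ β * ‖∫ k in Ioi (0 : ℝ), ph x t k * deriv (fun x' => Q x' k) x * h k‖ ≤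
      18 * M * (Real.sqrt t)⁻¹ * Real.sqrt (EH h) := by
  have hM0 : 0 ≤ M := (mul_nonneg (jap_rpow_pos 0 β).le (norm_nonneg _)).trans (b00 0 0)
  have mQ : ∀ x, Measurable (Q x) := fun x => (dk x).continuous.measurable
  have mQx : Measurable (fun k => deriv (fun x' => Q x' k) x) :=
    (meas_deriv_param Q mQ dx).comp measurable_prodMk_left
  have mph := (ph_cont x t).measurable
  have mh := h.continuous.measurable
  set K := 18 * (Real.sqrt t)⁻¹ * Real.sqrt (EH h) with hK
  have hK0 : 0 ≤ K := by positivity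
  have main : ∀ M', (jap x ^ β)⁻¹ * M < M' →
      ‖∫ k in Ioi (0 : ℝ), ph x t k * deriv (fun x' => Q x' k) x * h k‖ ≤ M' * K := by
    intro M' hM'
    obtain ⟨ε, hε, hb⟩ := near_bound β M M' x hM'
    have hM'0 : 0 ≤ M' := le_trans (by have := jap_rpow_pos x β; positivity) hM'.le
    have B : ∀ (z : ℝ → ℂ), (∀ y, jap y ^ β * ‖z y‖ ≤ M) → ∀ y ∈ Metric.ball x ε, ‖z y‖ ≤ M' :=
      fun z hz y hy => (bdd_of_w (jap_rpow_pos y β) (hz y)).trans (hb y hy).le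
    have hx : x ∈ Metric.ball x ε := Metric.mem_ball_self hε
    have hIntg : ∀ y ∈ Metric.ball x ε, Integrable (fun k => ph x t k * Q y k * h k) := by
      intro y hy
      apply int_bdd_mul (fun k => ph x t k * Q y k) h M' (mph.mul (mQ y)) _ h.integrable
      intro k
      rw [norm_mul, norm_ph, one_mul]
      exact B (fun y => Q y k) (fun y => b00 y k) y hy
    have hD := (hasDerivAt_integral_of_dominated_loc_of_deriv_le (μ := volume.restrict (Ioi (0:ℝ)))
      (F := fun y k => ph x t k * Q y k * h k)
      (F' := fun y k => ph x t k * deriv (fun x' => Q x' k) y * h k)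
      (bound := fun k => M' * ‖h k‖) (Metric.ball_mem_nhds x hε)
      (Eventually.of_forall fun y => ((mph.mul (mQ y)).mul mh).aestronglyMeasurable)
      (hIntg x hx).integrableOn ((mph.mul mQx).mul mh).aestronglyMeasurable
      (Eventually.of_forall fun k y hy => by
        rw [norm_mul, norm_mul, norm_ph, one_mul]
        exact mul_le_mul_of_nonneg_right
          (B (fun y => deriv (fun x' => Q x' k) y) (fun y => b10 y k) y hy) (norm_nonneg _))
      (h.integrable.norm.const_mul M').integrableOn
      (Eventually.of_forall fun k y hy =>
        ((dx k y).hasDerivAt.const_mul (ph x t k)).mul_const (h k))).2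
    refine hD.le_of_lip' (by positivity) ?_
    filter_upwards [Metric.ball_mem_nhds x hε] with y hy
    have lip : ∀ (z : ℝ → ℂ), Differentiable ℝ z → (∀ y, jap y ^ β * ‖deriv z y‖ ≤ M) →
        ‖z y - z x‖ ≤ M' * ‖y - x‖ := by
      intro z hz hz'
      exact (convex_ball x ε).norm_image_sub_le_of_norm_deriv_le (fun u _ => hz u)
        (B _ hz') hx hy
    have hda : ∀ k, deriv (fun k => Q y k - Q x k) k =
        deriv (fun k' => Q y k') k - deriv (fun k' => Q x k') k := fun k =>
      deriv_fun_sub (dk y k) (dk x k)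
    have osc := osc_bound x t (M' * ‖y - x‖) ht (fun k => Q y k - Q x k) ((dk y).sub (dk x))
      (fun k => lip (fun y => Q y k) (dx k) (fun y => b10 y k))
      (fun k => by
        rw [hda]
        exact lip (fun y => deriv (fun k' => Q y k') k) (dxk k) (fun y => b11 y k)) h
    rw [← integral_sub (hIntg y hy).integrableOn (hIntg x hx).integrableOn]
    have e : ∀ k, ph x t k * Q y k * h k - ph x t k * Q x k * h k =
      ph x t k * (Q y k - Q x k) * h k := fun k => by ring
    simp only [e]
    refine osc.trans (le_of_eq ?_)
    rw [hK]
    ring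
  set D := ‖∫ k in Ioi (0 : ℝ), ph x t k * deriv (fun x' => Q x' k) x * h k‖
  have hw := jap_rpow_pos x β
  have : D ≤ (jap x ^ β)⁻¹ * M * K := by
    apply le_of_forall_pos_le_add
    intro ε hε
    have h1 := main ((jap x ^ β)⁻¹ * M + ε / (K + 1)) (by
      have : 0 < ε / (K + 1) := by positivity
      linarith)
    have h2 : ε / (K + 1) * K ≤ ε := by
      rw [div_mul_eq_mul_div, div_le_iff₀ (by positivity)]
      nlinarith
    nlinarith
  calc jap x ^ β * D ≤ jap x ^ β * ((jap x ^ β)⁻¹ * M * K) := by gcongr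
    _ = _ := by rw [hK]; field_simp

theorem F_deriv (β M x t : ℝ) (Q : ℝ → ℝ → ℂ)
    (dk : ∀ x : ℝ, Differentiable ℝ (fun k => Q x k))
    (dx : ∀ k : ℝ, Differentiable ℝ (fun x => Q x k))
    (b00 : ∀ x k : ℝ, jap x ^ β * ‖Q x k‖ ≤ M)
    (b10 : ∀ x k : ℝ, jap x ^ β * ‖deriv (fun x' => Q x' k) x‖ ≤ M)
    (h : SchwartzMap ℝ ℂ) :
    Integrable (fun k : ℝ => (k : ℂ) * (ph x t k * Q x k * h k)) ∧
    deriv (fun x' : ℝ => ∫ k in Set.Ioi (0:ℝ),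
                Complex.exp (Complex.I * (k : ℂ) * (x' : ℂ)) * Q x' k *
                  Complex.exp (Complex.I * (k : ℂ) ^ 2 * (t : ℂ)) * h k) x =
    Complex.I * (∫ k in Ioi (0 : ℝ), (k : ℂ) * (ph x t k * Q x k * h k)) +
      ∫ k in Ioi (0 : ℝ), ph x t k * deriv (fun x' => Q x' k) x * h k := by
  have hM0 : 0 ≤ M := (mul_nonneg (jap_rpow_pos 0 β).le (norm_nonneg _)).trans (b00 0 0)
  have mQ : ∀ x, Measurable (Q x) := fun x => (dk x).continuous.measurable
  have mQx : Measurable (fun k => deriv (fun x' => Q x' k) x) :=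
    (meas_deriv_param Q mQ dx).comp measurable_prodMk_left
  have mph := fun y => (ph_cont y t).measurable
  have mh := h.continuous.measurable
  have mk : Measurable (fun k : ℝ => (k : ℂ)) := Complex.measurable_ofReal
  set M' := (jap x ^ β)⁻¹ * M + 1 with hM'
  obtain ⟨ε, hε, hb⟩ := near_bound β M M' x (by linarith)
  have hM'0 : 0 ≤ M' := by have := jap_rpow_pos x β; positivity
  have B : ∀ (z : ℝ → ℂ), (∀ y, jap y ^ β * ‖z y‖ ≤ M) → ∀ y ∈ Metric.ball x ε, ‖z y‖ ≤ M' :=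
    fun z hz y hy => (bdd_of_w (jap_rpow_pos y β) (hz y)).trans (hb y hy).le
  have hx : x ∈ Metric.ball x ε := Metric.mem_ball_self hε
  have B0 := fun k => B (fun y => Q y k) (fun y => b00 y k)
  have B1 := fun k => B (fun y => deriv (fun x' => Q x' k) y) (fun y => b10 y k)
  have hkh : Integrable (fun k : ℝ => ‖k‖ * ‖h k‖) := by
    simpa using h.integrable_pow_mul volume 1
  have hkh' : Integrable (fun k : ℝ => (k : ℂ) * h k) := by
    refine hkh.mono' (mk.mul mh).aestronglyMeasurable (Eventually.of_forall fun k => ?_)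
    rw [norm_mul, Complex.norm_real]
  have i0 : Integrable (fun k : ℝ => ph x t k * Q x k * h k) := by
    apply int_bdd_mul (fun k => ph x t k * Q x k) h M' ((mph x).mul (mQ x)) _ h.integrable
    intro k
    rw [norm_mul, norm_ph, one_mul]
    exact B0 k x hx
  have i1 : Integrable (fun k : ℝ => (k : ℂ) * (ph x t k * Q x k * h k)) := by
    have := int_bdd_mul (fun k => ph x t k * Q x k) (fun k : ℝ => (k : ℂ) * h k) M'
      ((mph x).mul (mQ x)) (fun k => by
        rw [norm_mul, norm_ph, one_mul]
        exact B0 k x hx) hkh'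
    refine this.congr (Eventually.of_forall fun k => ?_)
    ring
  have i2 : Integrable (fun k : ℝ => ph x t k * deriv (fun x' => Q x' k) x * h k) := by
    apply int_bdd_mul (fun k => ph x t k * deriv (fun x' => Q x' k) x) h M' ((mph x).mul mQx) _
      h.integrable
    intro k
    rw [norm_mul, norm_ph, one_mul]
    exact B1 k x hx
  refine ⟨i1, ?_⟩
  have e : ∀ x' k : ℝ, Complex.exp (Complex.I * (k : ℂ) * (x' : ℂ)) * Q x' k *
      Complex.exp (Complex.I * (k : ℂ) ^ 2 * (t : ℂ)) * h k = ph x' t k * Q x' k * h k := by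
    intro x' k
    unfold ph
    ring
  simp only [e]
  have hphx : ∀ k y : ℝ, HasDerivAt (fun y => ph y t k) (Complex.I * k * ph y t k) y := by
    intro k y
    have h0 : HasDerivAt (fun y : ℝ => (y : ℂ)) 1 y := Complex.ofRealCLM.hasDerivAt
    have := ((h0.const_mul (Complex.I * (k : ℂ))).cexp).mul_const
      (Complex.exp (Complex.I * (k : ℂ) ^ 2 * (t : ℂ)))
    refine this.congr_deriv ?_
    unfold ph
    ring
  have hD := (hasDerivAt_integral_of_dominated_loc_of_deriv_le (μ := volume.restrict (Ioi (0:ℝ)))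
      (F := fun y k => ph y t k * Q y k * h k) (x₀ := x)
      (F' := fun y k => (Complex.I * k * ph y t k * Q y k +
        ph y t k * deriv (fun x' => Q x' k) y) * h k)
      (bound := fun k => M' * (‖k‖ * ‖h k‖) + M' * ‖h k‖) (Metric.ball_mem_nhds x hε)
      (Eventually.of_forall fun y => (((mph y).mul (mQ y)).mul mh).aestronglyMeasurable)
      i0.integrableOn
      ((((((mk.const_mul _).mul (mph x)).mul (mQ x)).add
        ((mph x).mul mQx)).mul mh).aestronglyMeasurable)
      (Eventually.of_forall fun k y hy => by
        rw [norm_mul]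
        have e1 : ‖Complex.I * k * ph y t k * Q y k‖ ≤ ‖k‖ * M' := by
          rw [norm_mul, norm_mul, norm_mul, norm_ph, Complex.norm_I, one_mul, mul_one,
            Complex.norm_real]
          exact mul_le_mul_of_nonneg_left (B0 k y hy) (norm_nonneg _)
        have e2 : ‖ph y t k * deriv (fun x' => Q x' k) y‖ ≤ M' := by
          rw [norm_mul, norm_ph, one_mul]
          exact B1 k y hy
        calc _ ≤ (‖k‖ * M' + M') * ‖h k‖ :=
              mul_le_mul_of_nonneg_right ((norm_add_le _ _).trans (add_le_add e1 e2))
                (norm_nonneg _)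
          _ = _ := by ring)
      ((hkh.const_mul M').add (h.integrable.norm.const_mul M')).integrableOn
      (Eventually.of_forall fun k y hy =>
        (((hphx k y).mul (dx k y).hasDerivAt).mul_const (h k)))).2
  rw [hD.deriv, ← integral_const_mul, ← integral_add (i1.const_mul _).integrableOn i2.integrableOn]
  congr 1
  ext k
  ring

theorem D1_identity (β M x t : ℝ) (Q : ℝ → ℝ → ℂ)
    (dk : ∀ x : ℝ, Differentiable ℝ (fun k => Q x k))
    (b00 : ∀ x k : ℝ, jap x ^ β * ‖Q x k‖ ≤ M)
    (b01 : ∀ x k : ℝ, jap x ^ β * ‖deriv (fun k' => Q x k') k‖ ≤ M)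
    (h : SchwartzMap ℝ ℂ)
    (i1 : Integrable (fun k : ℝ => (k : ℂ) * (ph x t k * Q x k * h k))) :
    2 * t * (Complex.I * (∫ k in Ioi (0 : ℝ), (k : ℂ) * (ph x t k * Q x k * h k))) =
      -(Q x 0 * h 0) - (∫ k in Ioi (0 : ℝ), ph x t k * deriv (fun k' => Q x k') k * h k) -
      (∫ k in Ioi (0 : ℝ), ph x t k * Q x k * deriv (h : ℝ → ℂ) k) -
      Complex.I * x * ∫ k in Ioi (0 : ℝ), ph x t k * Q x k * h k := by
  have mQ : ∀ x, Measurable (Q x) := fun x => (dk x).continuous.measurable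
  have mQk : Measurable (fun k => deriv (fun k' => Q x k') k) := measurable_deriv _
  have mph := (ph_cont x t).measurable
  have B0 : ∀ k, ‖ph x t k * Q x k‖ ≤ (jap x ^ β)⁻¹ * M := fun k => by
    rw [norm_mul, norm_ph, one_mul]; exact bdd_of_w (jap_rpow_pos x β) (b00 x k)
  have B1 : ∀ k, ‖ph x t k * deriv (fun k' => Q x k') k‖ ≤ (jap x ^ β)⁻¹ * M := fun k => by
    rw [norm_mul, norm_ph, one_mul]; exact bdd_of_w (jap_rpow_pos x β) (b01 x k)
  have i0 : Integrable (fun k : ℝ => ph x t k * Q x k * h k) :=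
    int_bdd_mul (fun k => ph x t k * Q x k) h _ (mph.mul (mQ x)) B0 h.integrable
  have i2 : Integrable (fun k : ℝ => ph x t k * deriv (fun k' => Q x k') k * h k) :=
    int_bdd_mul (fun k => ph x t k * deriv (fun k' => Q x k') k) h _ (mph.mul mQk) B1 h.integrable
  have i3 : Integrable (fun k : ℝ => ph x t k * Q x k * deriv (h : ℝ → ℂ) k) :=
    int_bdd_mul (fun k => ph x t k * Q x k) _ _ (mph.mul (mQ x)) B0 (sch_int' h)
  have hd : ∀ k : ℝ, HasDerivAt (fun k => ph x t k * Q x k * h k)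
      (2 * t * Complex.I * ((k : ℂ) * (ph x t k * Q x k * h k)) +
        Complex.I * x * (ph x t k * Q x k * h k) +
        ph x t k * deriv (fun k' => Q x k') k * h k +
        ph x t k * Q x k * deriv (h : ℝ → ℂ) k) k := by
    intro k
    have := ((ph_deriv x t k).mul ((dk x) k).hasDerivAt).mul (h.hasDerivAt k)
    refine this.congr_deriv ?_
    simp only [Pi.mul_apply]
    ring
  have hft : Tendsto (fun k => ph x t k * Q x k * h k) atTop (𝓝 0) := by
    have h1 : Tendsto (fun k => (jap x ^ β)⁻¹ * M * ‖h k‖) atTop (𝓝 0) := by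
      have := (((sch_tendsto h).mono_left atTop_le_cocompact).norm).const_mul ((jap x ^ β)⁻¹ * M)
      simpa using this
    refine squeeze_zero_norm (fun k => ?_) h1
    rw [norm_mul]
    exact mul_le_mul_of_nonneg_right (B0 k) (norm_nonneg _)
  have j1 := i1.const_mul (2 * t * Complex.I)
  have j2 := i0.const_mul (Complex.I * x)
  have j12 : Integrable (fun k : ℝ => 2 * t * Complex.I * ((k : ℂ) * (ph x t k * Q x k * h k)) +
        Complex.I * x * (ph x t k * Q x k * h k)) := j1.add j2
  have j123 : Integrable (fun k : ℝ => 2 * t * Complex.I * ((k : ℂ) * (ph x t k * Q x k * h k)) +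
        Complex.I * x * (ph x t k * Q x k * h k) +
        ph x t k * deriv (fun k' => Q x k') k * h k) := j12.add i2
  have ftc := integral_Ioi_of_hasDerivAt_of_tendsto' (a := (0 : ℝ)) (fun k _ => hd k)
    (j123.add i3).integrableOn hft
  rw [integral_add j123.integrableOn i3.integrableOn, integral_add j12.integrableOn i2.integrableOn,
    integral_add j1.integrableOn j2.integrableOn, integral_const_mul, integral_const_mul] at ftc
  have hph0 : ph x t 0 = 1 := by simp [ph]
  rw [hph0] at ftc
  linear_combination ftc

theorem ET_ind (x t w : ℝ) (q f : ℝ → ℂ) :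
    ET (fun k => (w : ℂ) * q k * (Ioi (0 : ℝ)).indicator
      (fun k : ℝ => Complex.exp (Complex.I * (k : ℂ) ^ 2 * (t : ℂ)) * f k) k) x =
    w * ∫ k in Ioi (0 : ℝ), ph x t k * q k * f k := by
  rw [← integral_const_mul, ← integral_indicator measurableSet_Ioi]
  unfold ET
  congr 1
  ext k
  by_cases hk : k ∈ Ioi (0 : ℝ)
  · simp only [indicator_of_mem hk]
    unfold ph
    ring
  · simp only [indicator_of_notMem hk]
    ring

noncomputable def gI (t : ℝ) (f : ℝ → ℂ) : ℝ → ℂ :=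
  (Ioi (0 : ℝ)).indicator (fun k : ℝ => Complex.exp (Complex.I * (k : ℂ) ^ 2 * (t : ℂ)) * f k)

theorem gI_le (t : ℝ) (f : ℝ → ℂ) (k : ℝ) : ‖gI t f k‖ ≤ ‖f k‖ := by
  unfold gI
  refine (norm_indicator_le_norm_self _ _).trans ?_
  rw [norm_mul, norm_cexp_sq, one_mul]

theorem gI_meas (t : ℝ) (f : ℝ → ℂ) (hf : Measurable f) : Measurable (gI t f) := by
  unfold gI
  exact Measurable.indicator (by fun_prop) measurableSet_Ioi

theorem pw_final (β M x t : ℝ) (ht : 1 ≤ t) (Q : ℝ → ℝ → ℂ)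
    (dk : ∀ x : ℝ, Differentiable ℝ (fun k => Q x k))
    (dx : ∀ k : ℝ, Differentiable ℝ (fun x => Q x k))
    (dxk : ∀ k : ℝ, Differentiable ℝ (fun x => deriv (fun k' => Q x k') k))
    (b00 : ∀ x k : ℝ, jap x ^ β * ‖Q x k‖ ≤ M)
    (b01 : ∀ x k : ℝ, jap x ^ β * ‖deriv (fun k' => Q x k') k‖ ≤ M)
    (b10 : ∀ x k : ℝ, jap x ^ β * ‖deriv (fun x' => Q x' k) x‖ ≤ M)
    (b11 : ∀ x k : ℝ, jap x ^ β * ‖deriv (fun x' => deriv (fun k' => Q x' k') k) x‖ ≤ M)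
    (h : SchwartzMap ℝ ℂ) :
    jap x ^ β * ‖deriv (fun x' : ℝ => ∫ k in Set.Ioi (0:ℝ),
                Complex.exp (Complex.I * (k : ℂ) * (x' : ℂ)) * Q x' k *
                  Complex.exp (Complex.I * (k : ℂ) ^ 2 * (t : ℂ)) * h k) x‖ ≤
    (Real.sqrt t)⁻¹ * (19 * M * Real.sqrt (EH h) +
      ‖ET (fun k => ((jap x ^ β : ℝ) : ℂ) * deriv (fun k' => Q x k') k * gI t h k) x‖ +
      ‖ET (fun k => ((jap x ^ β : ℝ) : ℂ) * Q x k * gI t (deriv (h : ℝ → ℂ)) k) x‖ +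
      |x| * ‖ET (fun k => ((jap x ^ β : ℝ) : ℂ) * Q x k * gI t h k) x‖) := by
  obtain ⟨i1, hF⟩ := F_deriv β M x t Q dk dx b00 b10 h
  have hD1 := D1_identity β M x t Q dk b00 b01 h i1
  have hD2 := D2_bound β M x t ht Q dk dx dxk b00 b10 b11 h
  have hw := jap_rpow_pos x β
  have hwn : ‖((jap x ^ β : ℝ) : ℂ)‖ = jap x ^ β := by
    rw [Complex.norm_real, Real.norm_of_nonneg hw.le]
  have E1 := ET_ind x t (jap x ^ β) (fun k => deriv (fun k' => Q x k') k) h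
  have E2 := ET_ind x t (jap x ^ β) (Q x) (deriv (h : ℝ → ℂ))
  have E3 := ET_ind x t (jap x ^ β) (Q x) h
  unfold gI
  rw [hF, E1, E2, E3, norm_mul, norm_mul, norm_mul, hwn]
  have hQ0 : jap x ^ β * ‖Q x 0 * h 0‖ ≤ M * Real.sqrt (EH h) := by
    rw [norm_mul, ← mul_assoc]
    exact mul_le_mul (b00 x 0) (sup_bound' h 0) (norm_nonneg _)
      ((mul_nonneg hw.le (norm_nonneg _)).trans (b00 x 0))
  set N := Real.sqrt (EH h)
  set w := jap x ^ β
  set J1 := Complex.I * ∫ k in Ioi (0 : ℝ), (k : ℂ) * (ph x t k * Q x k * h k)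
  set J2 := ∫ k in Ioi (0 : ℝ), ph x t k * deriv (fun x' => Q x' k) x * h k
  set a := ∫ k in Ioi (0 : ℝ), ph x t k * deriv (fun k' => Q x k') k * h k
  set b := ∫ k in Ioi (0 : ℝ), ph x t k * Q x k * deriv (h : ℝ → ℂ) k
  set c := ∫ k in Ioi (0 : ℝ), ph x t k * Q x k * h k
  have n1 : 2 * t * ‖J1‖ ≤ ‖Q x 0 * h 0‖ + ‖a‖ + ‖b‖ + |x| * ‖c‖ := by
    have e : 2 * t * ‖J1‖ = ‖2 * (t : ℂ) * J1‖ := by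
      rw [norm_mul (2 * (t : ℂ)) J1, norm_mul (2 : ℂ) (t : ℂ), Complex.norm_real,
        Real.norm_of_nonneg (by linarith), Complex.norm_ofNat]
    rw [e, hD1]
    refine (norm_sub_le _ _).trans (add_le_add ((norm_sub_le _ _).trans (add_le_add
      ((norm_sub_le _ _).trans (add_le_add ?_ le_rfl)) le_rfl)) ?_)
    · rw [norm_neg]
    · rw [norm_mul, norm_mul, Complex.norm_I, one_mul, Complex.norm_real, Real.norm_eq_abs]
  set τ := Real.sqrt t
  have htτ : t = τ ^ 2 := (Real.sq_sqrt (by linarith)).symm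
  have hτ1 : 1 ≤ τ := Real.one_le_sqrt.mpr ht
  set S := M * N + w * ‖a‖ + w * ‖b‖ + |x| * (w * ‖c‖) with hS
  have hS0 : 0 ≤ S := by
    have : 0 ≤ M * N := (by positivity : 0 ≤ w * ‖Q x 0 * h 0‖).trans hQ0
    positivity
  have n2 : 2 * t * (w * ‖J1‖) ≤ S := by
    have := mul_le_mul_of_nonneg_left n1 hw.le
    rw [hS]
    nlinarith
  have n3 : w * ‖J1‖ ≤ τ⁻¹ * S := by
    rw [inv_mul_eq_div, le_div_iff₀ (by linarith)]
    have hJ : 0 ≤ w * ‖J1‖ := by positivity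
    have : τ ≤ 2 * t := by nlinarith
    nlinarith
  calc w * ‖J1 + J2‖ ≤ w * ‖J1‖ + w * ‖J2‖ := by
        rw [← mul_add]; exact mul_le_mul_of_nonneg_left (norm_add_le _ _) hw.le
    _ ≤ τ⁻¹ * S + 18 * M * τ⁻¹ * N := add_le_add n3 hD2
    _ = _ := by rw [hS]; ring

theorem four_sq (x a b c d : ℝ) : (1 + x ^ 2)⁻¹ * (a + b + c + |x| * d) ^ 2 ≤
    4 * ((1 + x ^ 2)⁻¹ * a ^ 2 + (1 + x ^ 2)⁻¹ * b ^ 2 + (1 + x ^ 2)⁻¹ * c ^ 2 + d ^ 2) := by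
  have hp : (0 : ℝ) < 1 + x ^ 2 := by positivity
  have e : d ^ 2 = (1 + x ^ 2)⁻¹ * ((1 + x ^ 2) * d ^ 2) := by field_simp
  have key : (a + b + c + |x| * d) ^ 2 ≤ 4 * (a ^ 2 + b ^ 2 + c ^ 2 + (1 + x ^ 2) * d ^ 2) := by
    have hx : (|x| * d) ^ 2 = x ^ 2 * d ^ 2 := by rw [mul_pow, sq_abs]
    nlinarith [sq_nonneg (a - b), sq_nonneg (a - c), sq_nonneg (b - c), sq_nonneg (a - |x| * d),
      sq_nonneg (b - |x| * d), sq_nonneg (c - |x| * d), sq_nonneg d]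
  rw [e]
  have := mul_le_mul_of_nonneg_left key (inv_pos.mpr hp).le
  linarith

theorem lint_cauchy : ∫⁻ x : ℝ, ENNReal.ofReal ((1 + x ^ 2)⁻¹) = ENNReal.ofReal Real.pi := by
  rw [← ofReal_integral_eq_lintegral_ofReal integrable_inv_one_add_sq
    (Eventually.of_forall fun x => by positivity), integral_univ_inv_one_add_sq]

theorem lint_sch (f : ℝ → ℂ) (hf : Integrable (fun k => ‖f k‖ ^ 2)) :
    ∫⁻ k, ‖f k‖ₑ ^ 2 = ENNReal.ofReal (∫ k, ‖f k‖ ^ 2) := by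
  rw [ofReal_integral_eq_lintegral_ofReal hf (Eventually.of_forall fun x => by positivity)]
  congr 1
  ext k
  rw [ENNReal.ofReal_pow (norm_nonneg _), ofReal_norm]

theorem statement_10 :
    ∀ M : ℝ, 0 < M → ∃ C : ℝ, 0 < C ∧
      ∀ (β : ℝ) (Q : ℝ → ℝ → ℂ),
      (∀ x : ℝ, Differentiable ℝ (fun k => Q x k)) →
      (∀ k : ℝ, Differentiable ℝ (fun x => Q x k)) →
      (∀ k : ℝ, Differentiable ℝ (fun x => deriv (fun k' => Q x k') k)) →
      (∀ x k : ℝ, jap x ^ β * ‖Q x k‖ ≤ M) →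
      (∀ x k : ℝ, jap x ^ β * ‖deriv (fun k' => Q x k') k‖ ≤ M) →
      (∀ x k : ℝ, jap x ^ β * ‖deriv (fun x' => Q x' k) x‖ ≤ M) →
      (∀ x k : ℝ, jap x ^ β * ‖deriv (fun x' => deriv (fun k' => Q x' k') k) x‖ ≤ M) →
      (∀ g : SchwartzMap ℝ ℂ,
        Real.sqrt (∫ x : ℝ, ‖∫ k : ℝ, Complex.exp (Complex.I * (k : ℂ) * (x : ℂ)) *
            (jap x ^ β : ℝ) * Q x k * g k‖ ^ 2) ≤ M * Real.sqrt (∫ k : ℝ, ‖g k‖ ^ 2)) →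
      (∀ g : SchwartzMap ℝ ℂ,
        Real.sqrt (∫ x : ℝ, ‖∫ k : ℝ, Complex.exp (Complex.I * (k : ℂ) * (x : ℂ)) *
            (jap x ^ β : ℝ) * deriv (fun k' => Q x k') k * g k‖ ^ 2) ≤
          M * Real.sqrt (∫ k : ℝ, ‖g k‖ ^ 2)) →
      (∀ g : SchwartzMap ℝ ℂ,
        Real.sqrt (∫ x : ℝ, ‖∫ k : ℝ, Complex.exp (Complex.I * (k : ℂ) * (x : ℂ)) *
            (jap x ^ β : ℝ) * deriv (fun x' => Q x' k) x * g k‖ ^ 2) ≤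
          M * Real.sqrt (∫ k : ℝ, ‖g k‖ ^ 2)) →
      (∀ g : SchwartzMap ℝ ℂ,
        Real.sqrt (∫ x : ℝ, ‖∫ k : ℝ, Complex.exp (Complex.I * (k : ℂ) * (x : ℂ)) *
            (jap x ^ β : ℝ) * deriv (fun x' => deriv (fun k' => Q x' k') k) x * g k‖ ^ 2) ≤
          M * Real.sqrt (∫ k : ℝ, ‖g k‖ ^ 2)) →
      ∀ t : ℝ, 1 ≤ t → ∀ h : SchwartzMap ℝ ℂ,
        Real.sqrt (∫ x : ℝ, jap x ^ (2 * (β - 1)) *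
            ‖deriv (fun x' : ℝ => ∫ k in Set.Ioi (0:ℝ),
                Complex.exp (Complex.I * (k : ℂ) * (x' : ℂ)) * Q x' k *
                  Complex.exp (Complex.I * (k : ℂ) ^ 2 * (t : ℂ)) * h k) x‖ ^ 2) ≤
          C * t ^ (-(1/2) : ℝ) *
            Real.sqrt ((∫ k : ℝ, ‖h k‖ ^ 2) + ∫ k : ℝ, ‖deriv (h : ℝ → ℂ) k‖ ^ 2) := by
  
  intro M hM
  refine ⟨Real.sqrt (4 * M ^ 2 * (361 * Real.pi + KL.toReal + 1)), by
    have := Real.pi_pos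
    have : 0 ≤ KL.toReal := ENNReal.toReal_nonneg
    positivity, ?_⟩
  intro β Q dk dx dxk b00 b01 b10 b11 op _ _ _ t ht h
  have mQ : ∀ x, Measurable (Q x) := fun x => (dk x).continuous.measurable
  have mQk : ∀ x, Measurable (fun k => deriv (fun k' => Q x k') k) := fun x => measurable_deriv _
  have hm := h.continuous.measurable
  have h'm := (sch_meas' h).measurable
  -- the half line data
  have gm := gI_meas t h hm
  have g'm := gI_meas t _ h'm
  have gi : Integrable (gI t h) := h.integrable.mono gm.aestronglyMeasurable
    (Eventually.of_forall (gI_le t h))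
  have g'i : Integrable (gI t (deriv (h : ℝ → ℂ))) := (sch_int' h).mono g'm.aestronglyMeasurable
    (Eventually.of_forall (gI_le t _))
  have g2 : MemLp (gI t h) 2 := (h.memLp 2 volume).mono gm.aestronglyMeasurable
    (Eventually.of_forall (gI_le t h))
  have g'2 : MemLp (gI t (deriv (h : ℝ → ℂ))) 2 := (sch_memLp' h).mono g'm.aestronglyMeasurable
    (Eventually.of_forall (gI_le t _))
  obtain ⟨gn, hgn, hgb⟩ := exists_seq t h
  set P := ∫ k : ℝ, ‖h k‖ ^ 2 with hP
  set P' := ∫ k : ℝ, ‖deriv (h : ℝ → ℂ) k‖ ^ 2 with hP'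
  have hP0 : 0 ≤ P := by rw [hP]; positivity
  have hP'0 : 0 ≤ P' := by rw [hP']; positivity
  have lP : ∫⁻ k, ‖gI t h k‖ₑ ^ 2 ≤ ENNReal.ofReal P := by
    rw [hP, ← lint_sch h (sch_sq_int h)]
    gcongr with k
    exact enorm_le_iff_norm_le.mpr (gI_le t h k)
  have lP' : ∫⁻ k, ‖gI t (deriv (h : ℝ → ℂ)) k‖ₑ ^ 2 ≤ ENNReal.ofReal P' := by
    rw [hP', ← lint_sch _ (sch_sq_int' h)]
    gcongr with k
    exact enorm_le_iff_norm_le.mpr (gI_le t _ k)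
  have T1 := local_L2 β M (fun x k => deriv (fun k' => Q x k') k) mQk dxk b01 b11 _ gm gi g2
  have T2 := local_L2 β M Q mQ dx b00 b10 _ g'm g'i g'2
  have T3 := op_ext β M Q dx mQ b00 h gn (gI t h) hgn hgb
    (fun n => op_schwartz β M hM Q dk dx dxk b00 b01 b10 b11 (gn n) (op (gn n)))
  rw [lint_sch h (sch_sq_int h), ← hP] at T3
  -- measurability
  have hmeasQ : Measurable (Function.uncurry Q) :=
    measurable_uncurry_of_continuous_of_measurable (fun k => (dx k).continuous) mQ
  have hmeasQk : Measurable (Function.uncurry (fun x k => deriv (fun k' => Q x k') k)) :=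
    measurable_uncurry_of_continuous_of_measurable (fun k => (dxk k).continuous) mQk
  have hw : Measurable (fun p : ℝ × ℝ => ((jap p.1 ^ β : ℝ) : ℂ)) :=
    (Complex.continuous_ofReal.comp ((jap_rpow_continuous β).comp continuous_fst)).measurable
  have hmG : ∀ (q : ℝ → ℝ → ℂ) (f : ℝ → ℂ), Measurable (Function.uncurry q) → Measurable f →
      Measurable (fun x => ET (fun k => ((jap x ^ β : ℝ) : ℂ) * q x k * f k) x) := by
    intro q f hq hf
    apply meas_ET (fun x k => ((jap x ^ β : ℝ) : ℂ) * q x k * f k)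
    exact (hw.mul hq).mul (hf.comp measurable_snd)
  have hmr : Measurable (fun x : ℝ => ENNReal.ofReal ((1 + x ^ 2)⁻¹)) := by fun_prop
  set A1 : ℝ → ℂ := fun x =>
    ET (fun k => ((jap x ^ β : ℝ) : ℂ) * deriv (fun k' => Q x k') k * gI t h k) x with hA1
  set A2 : ℝ → ℂ := fun x =>
    ET (fun k => ((jap x ^ β : ℝ) : ℂ) * Q x k * gI t (deriv (h : ℝ → ℂ)) k) x with hA2
  set A3 : ℝ → ℂ := fun x =>
    ET (fun k => ((jap x ^ β : ℝ) : ℂ) * Q x k * gI t h k) x with hA3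
  have mA1 : Measurable A1 := hmG _ _ hmeasQk gm
  have mA2 : Measurable A2 := hmG _ _ hmeasQ g'm
  set c0 := 19 * M * Real.sqrt (EH h) with hc0
  have hEH : EH h = P + P' := rfl
  have hc02 : c0 ^ 2 = 361 * M ^ 2 * (P + P') := by
    rw [hc0, mul_pow, Real.sq_sqrt (EH_nonneg h), hEH]; ring
  set F : ℝ → ℂ := fun x => deriv (fun x' : ℝ => ∫ k in Set.Ioi (0:ℝ),
                Complex.exp (Complex.I * (k : ℂ) * (x' : ℂ)) * Q x' k *
                  Complex.exp (Complex.I * (k : ℂ) ^ 2 * (t : ℂ)) * h k) x with hF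
  have pw : ∀ x, jap x ^ (2 * (β - 1)) * ‖F x‖ ^ 2 ≤
      4 * t⁻¹ * ((1 + x ^ 2)⁻¹ * c0 ^ 2 + (1 + x ^ 2)⁻¹ * ‖A1 x‖ ^ 2 +
        (1 + x ^ 2)⁻¹ * ‖A2 x‖ ^ 2 + ‖A3 x‖ ^ 2) := by
    intro x
    have h1 := pw_final β M x t ht Q dk dx dxk b00 b01 b10 b11 h
    have h2 := pow_le_pow_left₀ (mul_nonneg (jap_rpow_pos x β).le (norm_nonneg _)) h1 2
    have h3 : jap x ^ (2 * (β - 1)) = (1 + x ^ 2)⁻¹ * (jap x ^ β) ^ 2 := by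
      have : 2 * (β - 1) = β + β - 2 := by ring
      rw [this, Real.rpow_sub (jap_pos x), Real.rpow_add (jap_pos x), Real.rpow_two, jap_sq]
      ring
    have h4 := four_sq x c0 ‖A1 x‖ ‖A2 x‖ ‖A3 x‖
    have ht2 : (Real.sqrt t)⁻¹ ^ 2 = t⁻¹ := by rw [inv_pow, Real.sq_sqrt (by linarith)]
    rw [mul_pow, mul_pow, ht2] at h2
    have hp : (0 : ℝ) ≤ (1 + x ^ 2)⁻¹ := by positivity
    have ht0 : 0 ≤ t⁻¹ := by positivity
    calc jap x ^ (2 * (β - 1)) * ‖F x‖ ^ 2 = (1 + x ^ 2)⁻¹ * ((jap x ^ β) ^ 2 * ‖F x‖ ^ 2) := by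
          rw [h3, mul_assoc]
      _ ≤ (1 + x ^ 2)⁻¹ * (t⁻¹ * (c0 + ‖A1 x‖ + ‖A2 x‖ + |x| * ‖A3 x‖) ^ 2) :=
          mul_le_mul_of_nonneg_left h2 hp
      _ = t⁻¹ * ((1 + x ^ 2)⁻¹ * (c0 + ‖A1 x‖ + ‖A2 x‖ + |x| * ‖A3 x‖) ^ 2) := by ring
      _ ≤ t⁻¹ * (4 * ((1 + x ^ 2)⁻¹ * c0 ^ 2 + (1 + x ^ 2)⁻¹ * ‖A1 x‖ ^ 2 +
        (1 + x ^ 2)⁻¹ * ‖A2 x‖ ^ 2 + ‖A3 x‖ ^ 2)) := mul_le_mul_of_nonneg_left h4 ht0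
      _ = _ := by ring
  have pwe : ∀ x, ‖jap x ^ (2 * (β - 1)) * ‖F x‖ ^ 2‖ₑ ≤
      ENNReal.ofReal (4 * t⁻¹) * (ENNReal.ofReal ((1 + x ^ 2)⁻¹) * ENNReal.ofReal (c0 ^ 2) +
        ENNReal.ofReal ((1 + x ^ 2)⁻¹) * ‖A1 x‖ₑ ^ 2 +
        ENNReal.ofReal ((1 + x ^ 2)⁻¹) * ‖A2 x‖ₑ ^ 2 + ‖A3 x‖ₑ ^ 2) := by
    intro x
    have hn : 0 ≤ jap x ^ (2 * (β - 1)) * ‖F x‖ ^ 2 :=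
      mul_nonneg (jap_rpow_pos x _).le (by positivity)
    rw [Real.enorm_of_nonneg hn]
    refine (ENNReal.ofReal_le_ofReal (pw x)).trans (le_of_eq ?_)
    have sqe : ∀ z : ℂ, ‖z‖ₑ ^ 2 = ENNReal.ofReal (‖z‖ ^ 2) := fun z => by
      rw [ENNReal.ofReal_pow (norm_nonneg _), ofReal_norm]
    rw [sqe, sqe, sqe, ENNReal.ofReal_mul (p := 4 * t⁻¹) (by positivity),
      ENNReal.ofReal_add (by positivity)
      (by positivity), ENNReal.ofReal_add (by positivity) (by positivity),
      ENNReal.ofReal_add (by positivity) (by positivity), 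
      ENNReal.ofReal_mul (p := (1 + x ^ 2)⁻¹) (by positivity),
      ENNReal.ofReal_mul (p := (1 + x ^ 2)⁻¹) (by positivity),
      ENNReal.ofReal_mul (p := (1 + x ^ 2)⁻¹) (by positivity)]
  have n0 : Measurable (fun x : ℝ => ENNReal.ofReal ((1 + x ^ 2)⁻¹) * ENNReal.ofReal (c0 ^ 2)) :=
    hmr.mul_const _
  have n1 : Measurable (fun x : ℝ => ENNReal.ofReal ((1 + x ^ 2)⁻¹) * ENNReal.ofReal (c0 ^ 2) +
      ENNReal.ofReal ((1 + x ^ 2)⁻¹) * ‖A1 x‖ₑ ^ 2) :=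
    n0.add (hmr.mul (mA1.enorm.pow_const 2))
  have n2 : Measurable (fun x : ℝ => ENNReal.ofReal ((1 + x ^ 2)⁻¹) * ENNReal.ofReal (c0 ^ 2) +
      ENNReal.ofReal ((1 + x ^ 2)⁻¹) * ‖A1 x‖ₑ ^ 2 +
      ENNReal.ofReal ((1 + x ^ 2)⁻¹) * ‖A2 x‖ₑ ^ 2) :=
    n1.add (hmr.mul (mA2.enorm.pow_const 2))
  set κ := KL.toReal with hκ
  have hκ0 : 0 ≤ κ := ENNReal.toReal_nonneg
  have hKL : KL = ENNReal.ofReal κ := (ENNReal.ofReal_toReal KL_ne_top).symm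
  have hpi := Real.pi_pos
  have tot : ∫⁻ x, ‖jap x ^ (2 * (β - 1)) * ‖F x‖ ^ 2‖ₑ ≤
      ENNReal.ofReal (4 * t⁻¹ * (Real.pi * c0 ^ 2 + κ * (M ^ 2 * P) + κ * (M ^ 2 * P') +
        M ^ 2 * P)) := by
    refine (lintegral_mono pwe).trans ?_
    rw [lintegral_const_mul' _ _ ENNReal.ofReal_ne_top, lintegral_add_left n2,
      lintegral_add_left n1, lintegral_add_left n0, lintegral_mul_const _ hmr, lint_cauchy]
    rw [ENNReal.ofReal_mul (p := 4 * t⁻¹) (by positivity), ENNReal.ofReal_add (by positivity) (by positivity),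
      ENNReal.ofReal_add (by positivity) (by positivity),
      ENNReal.ofReal_add (by positivity) (by positivity), ENNReal.ofReal_mul hpi.le,
      ENNReal.ofReal_mul hκ0, ENNReal.ofReal_mul hκ0,
      ENNReal.ofReal_mul (p := M ^ 2) (by positivity),
      ENNReal.ofReal_mul (p := M ^ 2) (by positivity), ← hKL]
    refine mul_le_mul_right (add_le_add (add_le_add (add_le_add le_rfl ?_) ?_) T3) _
    · refine T1.trans ?_
      gcongr
    · refine T2.trans ?_
      gcongr
  have hIntg : ∫ x : ℝ, jap x ^ (2 * (β - 1)) * ‖F x‖ ^ 2 ≤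
      4 * t⁻¹ * (Real.pi * c0 ^ 2 + κ * (M ^ 2 * P) + κ * (M ^ 2 * P') + M ^ 2 * P) := by
    have ht0 : 0 < t := by linarith
    have e := (enorm_integral_le_lintegral_enorm _).trans tot
    have hle := le_abs_self (∫ x : ℝ, jap x ^ (2 * (β - 1)) * ‖F x‖ ^ 2)
    rw [← Real.norm_eq_abs] at hle
    refine hle.trans ?_
    rw [← ofReal_norm] at e
    exact (ENNReal.ofReal_le_ofReal_iff (by positivity)).mp e
  have hfin : 4 * t⁻¹ * (Real.pi * c0 ^ 2 + κ * (M ^ 2 * P) + κ * (M ^ 2 * P') + M ^ 2 * P) ≤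
      4 * M ^ 2 * (361 * Real.pi + κ + 1) * t⁻¹ * (P + P') := by
    rw [hc02]
    have : 0 ≤ 4 * t⁻¹ * (M ^ 2 * P') := by positivity
    nlinarith
  have ht0 : 0 ≤ t := by linarith
  have hts : t ^ (-(1/2) : ℝ) = Real.sqrt (t⁻¹) := by
    rw [Real.rpow_neg ht0, ← Real.sqrt_eq_rpow, Real.sqrt_inv]
  rw [hts, ← Real.sqrt_mul (by positivity), ← Real.sqrt_mul (by positivity)]
  exact Real.sqrt_le_sqrt (hIntg.trans hfin)
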